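/- arXiv:1306.5829 — 3 statements merged into one kernel-verified Lean document; each statement's English description precedes it below -/
import Mathlib

section
/- Let f : ℝ → ℝ≥0 be a one-dimensional isotropic logconcave probability density, i.e., ∫_ℝ f = 1, ∫_ℝ x f(x) dx = 0, and ∫_ℝ x² f(x) dx = 1. Let π_f denote the corresponding probability measure. Then for every partition of ℝ into three measurable sets S₁, S₂, S₃, π_f(S₃) ≥ (ln 2) · d(S₁, S₂) · π_f(S₁) · π_f(S₂), where d(S₁, S₂) = inf{|s − t| : s ∈ S₁, t ∈ S₂} is the distance between S₁ and S₂. -/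
open MeasureTheory Real Set

lemma tonelli_aux (μ : Measure ℝ) [SFinite μ] (S : Set ℝ) :
    ∫⁻ t in S, μ (Iio t) * μ (Ioi t) = ∫⁻ x, ∫⁻ y, volume (S ∩ Ioo x y) ∂μ ∂μ := by
  have hA : ∀ t, μ (Iio t) = ∫⁻ x, (Iio t).indicator 1 x ∂μ := fun t => by
    rw [lintegral_indicator_one measurableSet_Iio]
  have hB : ∀ t, μ (Ioi t) = ∫⁻ x, (Ioi t).indicator 1 x ∂μ := fun t => by
    rw [lintegral_indicator_one measurableSet_Ioi]
  have mI : Measurable (fun p : ℝ × ℝ => (Iio p.1).indicator (1 : ℝ → ENNReal) p.2) := by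
    have : (fun p : ℝ × ℝ => (Iio p.1).indicator (1 : ℝ → ENNReal) p.2)
      = ({p : ℝ × ℝ | p.2 < p.1}).indicator 1 := by
      ext p; simp [indicator]
    rw [this]
    exact measurable_one.indicator (measurableSet_lt measurable_snd measurable_fst)
  have mJ : Measurable (fun p : ℝ × ℝ => (Ioi p.1).indicator (1 : ℝ → ENNReal) p.2) := by
    have : (fun p : ℝ × ℝ => (Ioi p.1).indicator (1 : ℝ → ENNReal) p.2)
      = ({p : ℝ × ℝ | p.1 < p.2}).indicator 1 := by
      ext p; simp [indicator]
    rw [this]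
    exact measurable_one.indicator (measurableSet_lt measurable_fst measurable_snd)
  have mB : Measurable (fun t => μ (Ioi t)) := by
    simp_rw [hB]; exact mJ.lintegral_prod_right
  calc ∫⁻ t in S, μ (Iio t) * μ (Ioi t)
      = ∫⁻ t in S, ∫⁻ x, (Iio t).indicator 1 x * μ (Ioi t) ∂μ := by
        refine lintegral_congr fun t => ?_
        rw [lintegral_mul_const _ (measurable_one.indicator measurableSet_Iio), ← hA]
    _ = ∫⁻ x, ∫⁻ t in S, (Iio t).indicator 1 x * μ (Ioi t) ∂volume ∂μ := by
        rw [lintegral_lintegral_swap]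
        exact (mI.mul (mB.comp measurable_fst)).aemeasurable
    _ = ∫⁻ x, ∫⁻ t in S, ∫⁻ y, (Iio t).indicator 1 x * (Ioi t).indicator 1 y ∂μ ∂volume ∂μ := by
        refine lintegral_congr fun x => lintegral_congr fun t => ?_
        rw [lintegral_const_mul _ (measurable_one.indicator measurableSet_Ioi), ← hB]
    _ = ∫⁻ x, ∫⁻ y, ∫⁻ t in S, (Iio t).indicator 1 x * (Ioi t).indicator 1 y ∂volume ∂μ ∂μ := by
        refine lintegral_congr fun x => ?_
        rw [lintegral_lintegral_swap]
        exact ((mI.comp (measurable_fst.prodMk measurable_const)).mul mJ).aemeasurable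
    _ = _ := by
        refine lintegral_congr fun x => lintegral_congr fun y => ?_
        have : (fun t => (Iio t).indicator (1 : ℝ → ENNReal) x * (Ioi t).indicator 1 y)
          = (Ioo x y).indicator 1 := by
          ext t
          by_cases h1 : x < t <;> by_cases h2 : t < y <;> simp [indicator, h1, h2]
        rw [this, lintegral_indicator_one measurableSet_Ioo,
          Measure.restrict_apply measurableSet_Ioo, inter_comm]

lemma meas_vol (μ : Measure ℝ) [SFinite μ] (S : Set ℝ) (hS : MeasurableSet S) :
    Measurable (fun p : ℝ × ℝ => μ (S ∩ Ioo p.1 p.2)) := by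
  have : (fun p : ℝ × ℝ => μ (S ∩ Ioo p.1 p.2)) =
    fun p => ∫⁻ t, ({q : (ℝ × ℝ) × ℝ | q.2 ∈ S ∧ q.1.1 < q.2 ∧ q.2 < q.1.2}).indicator 1 (p, t) ∂μ := by
    ext p
    rw [← lintegral_indicator_one (hS.inter measurableSet_Ioo)]
    rfl
  rw [this]
  refine Measurable.lintegral_prod_right (measurable_one.indicator ?_)
  have h1 : Measurable (fun q : (ℝ × ℝ) × ℝ => q.2) := by fun_prop
  have h2 : Measurable (fun q : (ℝ × ℝ) × ℝ => q.1.1) := by fun_prop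
  have h3 : Measurable (fun q : (ℝ × ℝ) × ℝ => q.1.2) := by fun_prop
  exact (h1 hS).inter ((measurableSet_lt h2 h1).inter (measurableSet_lt h1 h3))

lemma tonelli2 (μ : Measure ℝ) [SFinite μ] (S : Set ℝ) (hS : MeasurableSet S) :
    2 * ∫⁻ t in S, μ (Iio t) * μ (Ioi t)
      = ∫⁻ x, ∫⁻ y, (volume (S ∩ Ioo x y) + volume (S ∩ Ioo y x)) ∂μ ∂μ := by
  have m := meas_vol volume S hS
  have h2 : ∫⁻ x, ∫⁻ y, volume (S ∩ Ioo y x) ∂μ ∂μ = ∫⁻ x, ∫⁻ y, volume (S ∩ Ioo x y) ∂μ ∂μ := by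
    rw [lintegral_lintegral_swap]
    exact (m.comp measurable_swap).aemeasurable
  have h3 : ∀ x, ∫⁻ y, (volume (S ∩ Ioo x y) + volume (S ∩ Ioo y x)) ∂μ
     = ∫⁻ y, volume (S ∩ Ioo x y) ∂μ + ∫⁻ y, volume (S ∩ Ioo y x) ∂μ := fun x =>
    lintegral_add_left (m.comp (measurable_const.prodMk measurable_id)) _
  simp_rw [h3]
  rw [lintegral_add_left (Measurable.lintegral_prod_right m), h2, tonelli_aux μ S, two_mul]

lemma gap (S₁ S₂ S₃ : Set ℝ) (hcover : S₁ ∪ S₂ ∪ S₃ = univ)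
    (d : ℝ) (hdist : ∀ s ∈ S₁, ∀ t ∈ S₂, d ≤ |s - t|) (x y : ℝ) (hx : x ∈ S₁) (hy : y ∈ S₂)
    (hxy : x ≤ y) : ENNReal.ofReal d ≤ volume (S₃ ∩ Ioo x y) := by
  set A := S₁ ∩ Icc x y with hA
  have hxA : x ∈ A := ⟨hx, le_rfl, hxy⟩
  have bA : BddAbove A := ⟨y, fun z hz => hz.2.2⟩
  set a := sSup A with ha
  have xa : x ≤ a := le_csSup bA hxA
  have ay : a ≤ y := csSup_le ⟨x, hxA⟩ fun z hz => hz.2.2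
  set B := S₂ ∩ Icc a y with hB
  have hyB : y ∈ B := ⟨hy, ay, le_rfl⟩
  have bB : BddBelow B := ⟨a, fun z hz => hz.2.1⟩
  set b := sInf B with hb
  have ab : a ≤ b := le_csInf ⟨y, hyB⟩ fun z hz => hz.2.1
  have hby : b ≤ y := csInf_le bB hyB
  have hdab : d ≤ b - a := by
    refine le_of_forall_pos_lt_add fun e he => ?_
    obtain ⟨s, hs, hs'⟩ := exists_lt_of_lt_csSup ⟨x, hxA⟩ (show a - e/2 < sSup A by linarith)
    obtain ⟨t, ht, ht'⟩ := exists_lt_of_csInf_lt ⟨y, hyB⟩ (show sInf B < b + e/2 by linarith)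
    have h1 := hdist s hs.1 t ht.1
    have h2 : s ≤ a := le_csSup bA hs
    have h3 : b ≤ t := csInf_le bB ht
    rw [abs_sub_comm, abs_of_nonneg (by linarith)] at h1
    linarith
  calc ENNReal.ofReal d ≤ ENNReal.ofReal (b - a) := ENNReal.ofReal_le_ofReal hdab
    _ = volume (Ioo a b) := by rw [Real.volume_Ioo]
    _ ≤ _ := by
      refine measure_mono fun z hz => ⟨?_, by linarith [hz.1], by linarith [hz.2]⟩
      have : z ∈ S₁ ∪ S₂ ∪ S₃ := by rw [hcover]; trivial
      rcases this with (h | h) | h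
      · have : z ≤ a := le_csSup bA ⟨h, by linarith [hz.1], by linarith [hz.2]⟩
        linarith [hz.1]
      · have : b ≤ z := csInf_le bB ⟨h, by linarith [hz.1], by linarith [hz.2]⟩
        linarith [hz.2]
      · exact h

lemma three_set (μ : Measure ℝ) [SFinite μ] (S₁ S₂ S₃ : Set ℝ)
    (hm₁ : MeasurableSet S₁) (hm₂ : MeasurableSet S₂) (hm₃ : MeasurableSet S₃)
    (hd₁₂ : Disjoint S₁ S₂)
    (hcover : S₁ ∪ S₂ ∪ S₃ = univ)
    (d : ℝ) (hdist : ∀ s ∈ S₁, ∀ t ∈ S₂, d ≤ |s - t|) :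
    ENNReal.ofReal d * (μ S₁ * μ S₂) ≤ ∫⁻ t in S₃, μ (Iio t) * μ (Ioi t) := by
  have key : 2 * (ENNReal.ofReal d * (μ S₁ * μ S₂)) ≤ 2 * ∫⁻ t in S₃, μ (Iio t) * μ (Ioi t) := by
    rw [tonelli2 μ S₃ hm₃]
    have e1 : ∀ A B : Set ℝ, MeasurableSet A → MeasurableSet B →
        ENNReal.ofReal d * (μ A * μ B) = ∫⁻ x, ∫⁻ y, ENNReal.ofReal d * (A.indicator 1 x * B.indicator 1 y) ∂μ ∂μ := by
      intro A B hA hB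
      have hmB : Measurable (B.indicator (1 : ℝ → ENNReal)) := measurable_one.indicator hB
      have hmA : Measurable (A.indicator (1 : ℝ → ENNReal)) := measurable_one.indicator hA
      simp_rw [lintegral_const_mul _ (hmB.const_mul _), lintegral_const_mul _ hmB]
      rw [lintegral_const_mul _ (hmA.mul_const _), lintegral_mul_const _ hmA, lintegral_indicator_one hA,
        lintegral_indicator_one hB]
    have hmm : ∀ A : Set ℝ, MeasurableSet A → Measurable (A.indicator (1 : ℝ → ENNReal)) :=
      fun A hA => measurable_one.indicator hA
    rw [two_mul]
    nth_rewrite 2 [mul_comm (μ S₁)]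
    rw [e1 _ _ hm₁ hm₂, e1 _ _ hm₂ hm₁, ← lintegral_add_left]
    · refine lintegral_mono fun x => ?_
      rw [← lintegral_add_left (((hmm _ hm₂).const_mul _).const_mul _)]
      refine lintegral_mono fun y => ?_
      have dj : ∀ z, z ∈ S₁ → z ∈ S₂ → False := fun z h1 h2 => Set.disjoint_left.1 hd₁₂ h1 h2
      have hdist' : ∀ s ∈ S₂, ∀ t ∈ S₁, d ≤ |s - t| := fun s hs t ht => by
        rw [abs_sub_comm]; exact hdist t ht s hs
      have hcover' : S₂ ∪ S₁ ∪ S₃ = univ := by rw [union_comm S₂]; exact hcover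
      by_cases h1 : x ∈ S₁ <;> by_cases h2 : y ∈ S₂ <;> by_cases h3 : x ∈ S₂ <;> by_cases h4 : y ∈ S₁ <;>
        simp only [indicator, h1, h2, h3, h4, if_true, if_false, Pi.one_apply, mul_one, mul_zero, add_zero, zero_add, zero_le]
      all_goals first
        | exact (dj x h1 h3).elim
        | exact (dj y h4 h2).elim
        | skip
      · rcases le_total x y with h | h
        · exact (gap S₁ S₂ S₃ hcover d hdist x y h1 h2 h).trans le_self_add
        · exact (gap S₂ S₁ S₃ hcover' d hdist' y x h2 h1 h).trans le_add_self
      · rcases le_total x y with h | h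
        · exact (gap S₂ S₁ S₃ hcover' d hdist' x y h3 h4 h).trans le_self_add
        · exact (gap S₁ S₂ S₃ hcover d hdist y x h4 h3 h).trans le_add_self
    · simp_rw [lintegral_const_mul _ ((hmm _ hm₂).const_mul _), lintegral_const_mul _ (hmm _ hm₂)]
      exact ((hmm _ hm₁).mul_const _).const_mul _
  rwa [ENNReal.mul_le_mul_iff_right (by simp) (by simp)] at key

/-- pointwise comparison -/
lemma analytic (a b : ℝ) (ha : 0 < a) (hb : 0 < b) (hab : a ≠ b) (p : ℝ) (hp0 : 0 ≤ p) (hp1 : p ≤ 1) :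
    p * (1 - p) ≤ 2 * (a * (1 - p) + b * p) * ∫ u in (0:ℝ)..1, u * (1 - u) / (a * (1 - u) + b * u) := by
  obtain ⟨A, hA, rfl⟩ : ∃ A : ℝ, 0 < A ∧ a = A ^ 2 := ⟨√a, Real.sqrt_pos.2 ha, (Real.sq_sqrt ha.le).symm⟩
  obtain ⟨B, hB, rfl⟩ : ∃ A : ℝ, 0 < A ∧ b = A ^ 2 := ⟨√b, Real.sqrt_pos.2 hb, (Real.sq_sqrt hb.le).symm⟩
  have hAB : A ≠ B := fun h => hab (by rw [h])
  have hAB' : A - B ≠ 0 := sub_ne_zero.2 hAB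
  have hS : A + B ≠ 0 := by positivity
  have hD : B ^ 2 - A ^ 2 ≠ 0 := by
    have : B ^ 2 - A ^ 2 = -((A - B) * (A + B)) := by ring
    rw [this]; exact neg_ne_zero.2 (mul_ne_zero hAB' hS)
  have hy : ∀ u ∈ Icc (0:ℝ) 1, 0 < A ^ 2 * (1 - u) + B ^ 2 * u := by
    intro u hu
    rcases hu.1.eq_or_lt with h | h
    · rw [← h]; simp; positivity
    · have := hu.2
      have : 0 ≤ A ^ 2 * (1 - u) := mul_nonneg (by positivity) (by linarith)
      positivity
  have hu01 : uIcc (0:ℝ) 1 = Icc 0 1 := uIcc_of_le zero_le_one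
  set K : ℝ → ℝ := fun u => ((A ^ 2 + B ^ 2 - A * B / 2) * u - (A ^ 2 * u + (B ^ 2 - A ^ 2) * u ^ 2 / 2)
    - (A * B / 2) * (A ^ 2 * B ^ 2) * (u / (A ^ 2 * (A ^ 2 * (1 - u) + B ^ 2 * u)))) / (B ^ 2 - A ^ 2) ^ 2 with hK
  set k : ℝ → ℝ := fun u => ((A ^ 2 + B ^ 2 - A * B / 2) - (A ^ 2 * (1 - u) + B ^ 2 * u)
    - (A * B / 2) * (A ^ 2 * B ^ 2) * (1 / (A ^ 2 * (1 - u) + B ^ 2 * u) ^ 2)) / (B ^ 2 - A ^ 2) ^ 2 with hk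
  have hder : ∀ u ∈ uIcc (0:ℝ) 1, HasDerivAt K (k u) u := by
    intro u hu
    rw [hu01] at hu
    have hyu := (hy u hu).ne'
    have h1 : HasDerivAt (fun u : ℝ => A ^ 2 * (A ^ 2 * (1 - u) + B ^ 2 * u)) (A ^ 2 * (B ^ 2 - A ^ 2)) u := by
      have := ((((hasDerivAt_id u).const_sub 1).const_mul (A ^ 2)).add ((hasDerivAt_id u).const_mul (B ^ 2))).const_mul (A ^ 2)
      exact this.congr_deriv (by ring)
    have h2 := (hasDerivAt_id u).div h1 (mul_ne_zero (by positivity) hyu)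
    have h3 := (((hasDerivAt_id u).const_mul (A ^ 2 + B ^ 2 - A * B / 2)).sub
      (((hasDerivAt_id u).const_mul (A ^ 2)).add ((((hasDerivAt_id u).pow 2).const_mul (B ^ 2 - A ^ 2)).div_const 2)))
    have h4 := (h3.sub (h2.const_mul ((A * B / 2) * (A ^ 2 * B ^ 2)))).div_const ((B ^ 2 - A ^ 2) ^ 2)
    refine h4.congr_deriv ?_
    simp only [hk, id]
    have hA0 := hA.ne'
    congr 1
    have e1 : (1 * (A ^ 2 * (A ^ 2 * (1 - u) + B ^ 2 * u)) - u * (A ^ 2 * (B ^ 2 - A ^ 2))) /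
          (A ^ 2 * (A ^ 2 * (1 - u) + B ^ 2 * u)) ^ 2 = 1 / (A ^ 2 * (1 - u) + B ^ 2 * u) ^ 2 := by
      rw [div_eq_div_iff (by positivity) (by positivity)]; ring
    rw [e1]; norm_num; ring
  have hkc : ContinuousOn k (uIcc 0 1) := by
    rw [hu01]
    refine ContinuousOn.div_const (ContinuousOn.sub (by fun_prop) (ContinuousOn.mul continuousOn_const
      (ContinuousOn.div continuousOn_const (by fun_prop) ?_))) _
    intro u hu; exact pow_ne_zero _ (hy u hu).ne'
  have hint := intervalIntegral.integral_eq_sub_of_hasDerivAt hder (hkc.intervalIntegrable)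
  have hval : K 1 - K 0 = 1 / (2 * (A + B) ^ 2) := by
    simp only [hK]
    have : B ^ 2 - A ^ 2 = -((A - B) * (A + B)) := by ring
    rw [this]
    field_simp
    ring
  have hmono : ∫ u in (0:ℝ)..1, k u ≤ ∫ u in (0:ℝ)..1, u * (1 - u) / (A ^ 2 * (1 - u) + B ^ 2 * u) := by
    refine intervalIntegral.integral_mono_on zero_le_one hkc.intervalIntegrable ?_ ?_
    · apply ContinuousOn.intervalIntegrable
      rw [hu01]
      exact ContinuousOn.div (by fun_prop) (by fun_prop) fun u hu => (hy u hu).ne'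
    · intro u hu
      have hyu := hy u hu
      simp only [hk]
      set y := A ^ 2 * (1 - u) + B ^ 2 * u with hyd
      have e : u * (1 - u) = (y - A ^ 2) * (B ^ 2 - y) / (B ^ 2 - A ^ 2) ^ 2 := by
        rw [eq_div_iff (by positivity), hyd]; ring
      rw [e, div_div, mul_comm ((B ^ 2 - A ^ 2) ^ 2) y, ← div_div]
      gcongr
      rw [← sub_nonneg]
      have : (y - A ^ 2) * (B ^ 2 - y) / y - (A ^ 2 + B ^ 2 - A * B / 2 - y - A * B / 2 * (A ^ 2 * B ^ 2) * (1 / y ^ 2))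
        = A * B / 2 * ((y - A * B) / y) ^ 2 := by
        field_simp; ring
      rw [this]; positivity
  rw [hint, hval] at hmono
  have hpos : 0 ≤ A ^ 2 * (1 - p) + B ^ 2 * p := (hy p ⟨hp0, hp1⟩).le
  calc p * (1 - p) ≤ 2 * (A ^ 2 * (1 - p) + B ^ 2 * p) * (1 / (2 * (A + B) ^ 2)) := by
        rw [mul_one_div, le_div_iff₀ (by positivity)]
        nlinarith [sq_nonneg (A * (1 - p) - B * p)]
    _ ≤ _ := by gcongr


open ProbabilityTheory Filter Topology in
lemma cdf_cont (μ : Measure ℝ) [IsProbabilityMeasure μ] [NullSingletonClass μ] :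
    Continuous (cdf μ) := by
  rw [continuous_iff_continuousAt]
  intro a
  have h := (cdf μ).measure_singleton a
  rw [measure_cdf, measure_singleton, eq_comm, ENNReal.ofReal_eq_zero] at h
  have hm := monotone_cdf μ
  rw [hm.continuousAt_iff_leftLim_eq_rightLim]
  have h2 := hm.leftLim_le (le_refl a)
  rw [(cdf μ).rightLim_eq]
  linarith

open ProbabilityTheory Filter Topology in
/-- the distribution function pushes forward to the uniform law -/
lemma map_cdf_unif (μ : Measure ℝ) [IsProbabilityMeasure μ] [NullSingletonClass μ] :
    μ.map (cdf μ) = volume.restrict (Icc 0 1) := by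
  have hc := cdf_cont μ
  have hm := monotone_cdf μ
  have : IsProbabilityMeasure (μ.map (cdf μ)) := Measure.isProbabilityMeasure_map hc.measurable.aemeasurable
  have ivt : ∀ v ∈ Ioo (0:ℝ) 1, ∃ x, cdf μ x = v := by
    intro v hv
    obtain ⟨x, hx⟩ := ((tendsto_cdf_atBot μ).eventually (gt_mem_nhds hv.1)).exists
    obtain ⟨y, hy⟩ := ((tendsto_cdf_atTop μ).eventually (lt_mem_nhds hv.2)).exists
    exact mem_range_of_exists_le_of_exists_ge hc ⟨x, hx.le⟩ ⟨y, hy.le⟩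
  refine Measure.ext_of_Iic _ _ fun u => ?_
  rw [Measure.map_apply hc.measurable measurableSet_Iic, Measure.restrict_apply measurableSet_Iic]
  rcases lt_or_ge u 0 with hu | hu
  · have h1 : cdf μ ⁻¹' Iic u = ∅ := by
      ext x; simp only [mem_preimage, mem_Iic, mem_empty_iff_false, iff_false, not_le]
      exact hu.trans_le (cdf_nonneg μ x)
    have h2 : Iic u ∩ Icc 0 1 = ∅ := by
      ext x; simp only [mem_inter_iff, mem_Iic, mem_Icc, mem_empty_iff_false, iff_false]
      rintro ⟨h, h', _⟩; linarith
    rw [h1, h2]; simp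
  rcases le_or_gt 1 u with hu1 | hu1
  · have h1 : cdf μ ⁻¹' Iic u = univ := by
      ext x; simp only [mem_preimage, mem_Iic, mem_univ, iff_true]
      exact (cdf_le_one μ x).trans hu1
    have h2 : Iic u ∩ Icc 0 1 = Icc 0 1 := by
      ext x; simp only [mem_inter_iff, mem_Iic, mem_Icc]
      constructor
      · exact fun h => h.2
      · exact fun h => ⟨h.2.trans hu1, h⟩
    rw [h1, h2]; simp
  have h2 : Iic u ∩ Icc 0 1 = Icc 0 u := by
    ext x; simp only [mem_inter_iff, mem_Iic, mem_Icc]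
    constructor
    · exact fun h => ⟨h.2.1, h.1⟩
    · exact fun h => ⟨h.2, h.1, h.2.trans hu1.le⟩
  rw [h2, Real.volume_Icc, sub_zero, ← ofReal_measureReal]
  congr 1
  refine le_antisymm (le_of_forall_gt_imp_ge_of_dense fun v hv => ?_) ?_
  · rcases le_or_gt 1 v with hv1 | hv1
    · exact measureReal_le_one.trans hv1
    · obtain ⟨x, hx⟩ := ivt v ⟨hu.trans_lt hv, hv1⟩
      rw [← hx, cdf_eq_real]
      refine measureReal_mono fun z hz => ?_
      simp only [mem_preimage, mem_Iic] at hz ⊢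
      by_contra! hcon
      have := hm hcon.le
      linarith
  · rcases hu.eq_or_lt with h0 | h0
    · rw [← h0]; exact measureReal_nonneg
    · obtain ⟨x, hx⟩ := ivt u ⟨h0, hu1⟩
      conv_lhs => rw [← hx, cdf_eq_real]
      refine measureReal_mono fun z hz => ?_
      simp only [mem_preimage, mem_Iic] at hz ⊢
      rw [← hx]; exact hm hz

def LC (f : ℝ → ℝ) : Prop := ∀ x y : ℝ, ∀ l ∈ Icc (0:ℝ) 1,
      f x ^ l * f y ^ (1 - l) ≤ f (l * x + (1 - l) * y)

/-- log-concavity at three points -/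
lemma LC.three {f : ℝ → ℝ} (h : LC f) {x y z : ℝ} (hxy : x < y) (hyz : y < z) :
    f x ^ ((z - y) / (z - x)) * f z ^ ((y - x) / (z - x)) ≤ f y := by
  have hzx : 0 < z - x := by linarith
  have := h x z ((z - y) / (z - x)) ⟨div_nonneg (by linarith) hzx.le, by
    rw [div_le_one hzx]; linarith⟩
  have e : 1 - (z - y) / (z - x) = (y - x) / (z - x) := by field_simp; ring
  rw [e] at this
  convert this using 2
  field_simp; ring

lemma LC.pos {f : ℝ → ℝ} (h : LC f) {x y z : ℝ} (hxy : x < y) (hyz : y < z)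
    (hx : 0 < f x) (hz : 0 < f z) : 0 < f y :=
  lt_of_lt_of_le (by positivity) (h.three hxy hyz)

/-- supporting exponential -/
lemma LC.support {f : ℝ → ℝ} (h : LC f) (hf0 : ∀ x, 0 ≤ f x) {x₀ t y₀ : ℝ} (hxt : x₀ < t) (hty : t < y₀)
    (hx : 0 < f x₀) (hy : 0 < f y₀) : ∃ s, ∀ z, f z ≤ f t * exp (s * (z - t)) := by
  have ht := h.pos hxt hty hx hy
  have key : ∀ x y, x < t → t < y → 0 < f x → 0 < f y →
      (log (f y) - log (f t)) / (y - t) ≤ (log (f t) - log (f x)) / (t - x) := by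
    intro x y hx1 hy1 hfx hfy
    have h3 := Real.log_le_log (by positivity) (h.three hx1 hy1)
    rw [Real.log_mul (by positivity) (by positivity), Real.log_rpow hfx, Real.log_rpow hfy] at h3
    have hyx : 0 < y - x := by linarith
    have e : (y - t) / (y - x) * log (f x) + (t - x) / (y - x) * log (f y)
      = ((y - t) * log (f x) + (t - x) * log (f y)) / (y - x) := by ring
    rw [e, div_le_iff₀ hyx] at h3
    rw [div_le_div_iff₀ (by linarith) (by linarith)]
    nlinarith
  set A := {r | ∃ y, t < y ∧ 0 < f y ∧ r = (log (f y) - log (f t)) / (y - t)} with hA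
  have hne : A.Nonempty := ⟨_, y₀, hty, hy, rfl⟩
  have hbd : ∀ x, x < t → 0 < f x → ∀ r ∈ A, r ≤ (log (f t) - log (f x)) / (t - x) := by
    rintro x hx1 hx2 r ⟨y, h1, h2, rfl⟩
    exact key x y hx1 h1 hx2 h2
  have hb : BddAbove A := ⟨_, hbd x₀ hxt hx⟩
  refine ⟨sSup A, fun z => ?_⟩
  rcases (hf0 z).eq_or_lt with h0 | hz
  · rw [← h0]; positivity
  rw [← Real.log_le_log_iff hz (by positivity), Real.log_mul ht.ne' (exp_pos _).ne', Real.log_exp]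
  rcases lt_trichotomy z t with hzt | rfl | hzt
  · have := csSup_le hne (hbd z hzt hz)
    rw [le_div_iff₀ (by linarith)] at this
    nlinarith
  · simp
  · have := le_csSup hb (show _ ∈ A from ⟨z, hzt, hz, rfl⟩)
    rw [div_le_iff₀ (by linarith)] at this
    nlinarith

/-- `g y = f y * exp (-s (y-t))` is antitone to the right of `t`. -/
lemma LC.anti {f : ℝ → ℝ} (h : LC f) (hf0 : ∀ x, 0 ≤ f x) {t s : ℝ}
    (hs : ∀ z, f z ≤ f t * exp (s * (z - t))) {y z : ℝ} (hy : t ≤ y) (hyz : y ≤ z) :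
    f z * exp (-s * (z - t)) ≤ f y * exp (-s * (y - t)) := by
  have hst : f z * exp (-s * (z - t)) ≤ f t := by
    have := mul_le_mul_of_nonneg_right (hs z) (exp_pos (-s * (z - t))).le
    rwa [mul_assoc, ← exp_add, show s * (z - t) + -s * (z - t) = 0 by ring, exp_zero, mul_one] at this
  rcases hy.eq_or_lt with rfl | hy
  · simpa using hst
  rcases hyz.eq_or_lt with rfl | hyz
  · exact le_rfl
  have h3 := h.three hy hyz
  have hzt : 0 < z - t := by linarith
  set l := (z - y) / (z - t) with hl
  set m := (y - t) / (z - t) with hm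
  have hlm : l + m = 1 := by rw [hl, hm]; field_simp; ring
  have hl0 : 0 < l := div_pos (by linarith) hzt
  have hm0 : 0 < m := div_pos (by linarith) hzt
  set w := f z * exp (-s * (z - t)) with hw
  have hw0 : 0 ≤ w := mul_nonneg (hf0 z) (exp_pos _).le
  have hfz : f z = w * exp (s * (z - t)) := by
    rw [hw, mul_assoc, ← exp_add, show -s * (z - t) + s * (z - t) = 0 by ring, exp_zero, mul_one]
  have h4 : w * exp (s * (y - t)) ≤ f y := by
    refine le_trans ?_ h3
    rw [hfz, mul_rpow hw0 (exp_pos _).le, ← exp_mul, show s * (z - t) * m = s * (y - t) by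
      rw [hm]; field_simp, ← mul_assoc]
    gcongr
    calc w = w ^ l * w ^ m := by rw [← rpow_add_of_nonneg hw0 hl0.le hm0.le, hlm, rpow_one]
      _ ≤ _ := by gcongr
  have := mul_le_mul_of_nonneg_right h4 (exp_pos (-s * (y - t))).le
  rwa [mul_assoc, ← exp_add, show s * (y - t) + -s * (y - t) = 0 by ring, exp_zero, mul_one] at this

lemma int_exp (s t x : ℝ) : ∫ y in t..x, s * exp (s * (y - t)) = exp (s * (x - t)) - 1 := by
  have : ∀ y ∈ uIcc t x, HasDerivAt (fun y => exp (s * (y - t))) (s * exp (s * (y - t))) y := by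
    intro y _
    have := (((hasDerivAt_id y).sub_const t).const_mul s).exp
    exact this.congr_deriv (by simp; ring)
  rw [intervalIntegral.integral_eq_sub_of_hasDerivAt this (by
    apply Continuous.intervalIntegrable; fun_prop)]
  simp

lemma LC.right {f : ℝ → ℝ} (h : LC f) (hf0 : ∀ x, 0 ≤ f x) (hint : Integrable f) {t s : ℝ}
    (hs : ∀ z, f z ≤ f t * exp (s * (z - t))) {x : ℝ} (hx : t ≤ x) :
    f x ≤ f t + s * ∫ y in t..x, f y := by
  have hi : IntervalIntegrable f volume t x := hint.intervalIntegrable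
  have hE : exp (s * (x - t)) * exp (-s * (x - t)) = 1 := by
    rw [← exp_add, show s * (x - t) + -s * (x - t) = 0 by ring, exp_zero]
  set g := f x * exp (-s * (x - t)) with hg
  have hgt : g ≤ f t := by
    have := h.anti hf0 hs le_rfl hx
    rwa [sub_self, mul_zero, exp_zero, mul_one] at this
  have hfx : f x = g * exp (s * (x - t)) := by rw [hg, mul_assoc, mul_comm (exp _), hE, mul_one]
  have hc : ∀ c : ℝ, IntervalIntegrable (fun y => c * (s * exp (s * (y - t)))) volume t x := by
    intro c; apply Continuous.intervalIntegrable; fun_prop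
  rw [← intervalIntegral.integral_const_mul]
  rcases le_total 0 s with h0 | h0
  · have : ∫ y in t..x, g * (s * exp (s * (y - t))) ≤ ∫ y in t..x, s * f y := by
      refine intervalIntegral.integral_mono_on hx (hc g) (hi.const_mul s) fun y hy => ?_
      have h1 := h.anti hf0 hs hy.1 hy.2
      have h2 : g * exp (s * (y - t)) ≤ f y := by
        have := mul_le_mul_of_nonneg_right h1 (exp_pos (s * (y - t))).le
        rwa [mul_assoc (f y), ← exp_add, show -s * (y - t) + s * (y - t) = 0 by ring, exp_zero, mul_one] at this
      nlinarith
    rw [intervalIntegral.integral_const_mul, int_exp] at this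
    linarith
  · have : ∫ y in t..x, f t * (s * exp (s * (y - t))) ≤ ∫ y in t..x, s * f y := by
      refine intervalIntegral.integral_mono_on hx (hc (f t)) (hi.const_mul s) fun y hy => ?_
      have h2 := hs y
      nlinarith
    rw [intervalIntegral.integral_const_mul, int_exp] at this
    linarith [hs x]

lemma LC.neg {f : ℝ → ℝ} (h : LC f) : LC (fun x => f (-x)) := by
  intro x y l hl
  have := h (-x) (-y) l hl
  convert this using 2; ring

lemma LC.all {f : ℝ → ℝ} (h : LC f) (hf0 : ∀ x, 0 ≤ f x) (hint : Integrable f) {t s : ℝ}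
    (hs : ∀ z, f z ≤ f t * exp (s * (z - t))) (x : ℝ) :
    f x ≤ f t + s * ∫ y in t..x, f y := by
  rcases le_total t x with hx | hx
  · exact h.right hf0 hint hs hx
  · have := h.neg.right (t := -t) (s := -s) (fun x => hf0 _) hint.comp_neg (fun z => by
      simp only [neg_neg]
      convert hs (-z) using 3; ring) (neg_le_neg hx)
    simp only [neg_neg] at this
    rw [intervalIntegral.integral_comp_neg, neg_neg, neg_neg, intervalIntegral.integral_symm] at this
    linarith

lemma moment (μ : Measure ℝ) [IsProbabilityMeasure μ] (h1 : Integrable (fun x => x) μ)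
    (h2 : Integrable (fun x => x ^ 2) μ) (hm : ∫ x, x ∂μ = 0) (hv : ∫ x, x ^ 2 ∂μ = 1) :
    ∫⁻ t, μ (Iio t) * μ (Ioi t) ≤ ENNReal.ofReal (√2 / 2) := by
  have key : 2 * ∫⁻ t, μ (Iio t) * μ (Ioi t) ≤ 2 * ENNReal.ofReal (√2 / 2) := by
    have h := tonelli2 μ univ MeasurableSet.univ
    rw [Measure.restrict_univ] at h
    rw [h]
    have s2 : (√2) ^ 2 = 2 := Real.sq_sqrt (by norm_num)
    have sp : 0 < √2 := by positivity
    calc ∫⁻ x, ∫⁻ y, (volume (univ ∩ Ioo x y) + volume (univ ∩ Ioo y x)) ∂μ ∂μ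
        ≤ ∫⁻ x, ∫⁻ y, ENNReal.ofReal (√2 / 4 * (x ^ 2 - 2 * x * y + y ^ 2) + √2 / 2) ∂μ ∂μ := by
          refine lintegral_mono fun x => lintegral_mono fun y => ?_
          rw [univ_inter, univ_inter, Real.volume_Ioo, Real.volume_Ioo]
          rcases le_total x y with hxy | hxy
          · rw [ENNReal.ofReal_of_nonpos (show x - y ≤ 0 by linarith), add_zero]
            apply ENNReal.ofReal_le_ofReal
            nlinarith [mul_nonneg sp.le (sq_nonneg (y - x - √2))]
          · rw [ENNReal.ofReal_of_nonpos (show y - x ≤ 0 by linarith), zero_add]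
            apply ENNReal.ofReal_le_ofReal
            nlinarith [mul_nonneg sp.le (sq_nonneg (x - y - √2))]
      _ = ∫⁻ x, ENNReal.ofReal (√2 / 4 * x ^ 2 + (√2 / 4 + √2 / 2)) ∂μ := by
          refine lintegral_congr fun x => ?_
          have i1 : Integrable (fun y : ℝ => 2 * x * y) μ := h1.const_mul _
          have i0 : Integrable (fun y : ℝ => x ^ 2) μ := integrable_const _
          have i4 : Integrable (fun y : ℝ => x ^ 2 - 2 * x * y) μ := i0.sub i1
          have i2 : Integrable (fun y : ℝ => x ^ 2 - 2 * x * y + y ^ 2) μ := (i0.sub i1).add h2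
          have i3 : Integrable (fun y : ℝ => √2 / 4 * (x ^ 2 - 2 * x * y + y ^ 2) + √2 / 2) μ :=
            (i2.const_mul _).add (integrable_const _)
          rw [← ofReal_integral_eq_lintegral_ofReal i3]
          · rw [integral_add (i2.const_mul _) (integrable_const _), integral_const_mul,
              integral_add i4 h2, integral_sub i0 i1, integral_const_mul, hm, hv]
            simp only [integral_const, probReal_univ, one_smul]
            congr 1; ring
          · refine Filter.Eventually.of_forall fun y => ?_
            have : 0 ≤ x ^ 2 - 2 * x * y + y ^ 2 := by nlinarith [sq_nonneg (x - y)]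
            simp only [Pi.zero_apply]
            positivity
      _ = 2 * ENNReal.ofReal (√2 / 2) := by
          have i3 : Integrable (fun x : ℝ => √2 / 4 * x ^ 2 + (√2 / 4 + √2 / 2)) μ :=
            (h2.const_mul _).add (integrable_const _)
          rw [← ofReal_integral_eq_lintegral_ofReal i3]
          · rw [integral_add (h2.const_mul _) (integrable_const _), integral_const_mul, hv]
            simp only [integral_const, probReal_univ, one_smul]
            rw [show (2 : ENNReal) = ENNReal.ofReal 2 by simp, ← ENNReal.ofReal_mul (by norm_num)]
            congr 1; ring
          · refine Filter.Eventually.of_forall fun y => ?_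
            simp only [Pi.zero_apply]
            positivity
  rwa [ENNReal.mul_le_mul_iff_right (by simp) (by simp)] at key

open ProbabilityTheory in
lemma Iio_mul_Ioi (μ : Measure ℝ) [IsProbabilityMeasure μ] [NullSingletonClass μ] (t : ℝ) :
    μ (Iio t) * μ (Ioi t) = ENNReal.ofReal (cdf μ t * (1 - cdf μ t)) := by
  rw [ENNReal.ofReal_mul (cdf_nonneg μ t), ofReal_cdf, measure_congr Iio_ae_eq_Iic]
  congr 1
  rw [← compl_Iic, prob_compl_eq_one_sub measurableSet_Iic, ← ofReal_cdf,
    ENNReal.ofReal_sub _ (cdf_nonneg μ t), ENNReal.ofReal_one]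

open ProbabilityTheory in
lemma profile (f : ℝ → ℝ) (hf0 : ∀ x, 0 ≤ f x) (hint : Integrable f) (μ : Measure ℝ) [IsProbabilityMeasure μ]
    (hμ : μ = volume.withDensity (fun x => ENNReal.ofReal (f x)))
    (hG : ∫⁻ t, μ (Iio t) * μ (Ioi t) ≤ ENNReal.ofReal (√2 / 2))
    (a b : ℝ) (ha : 0 < a) (hb : 0 < b) (hab : a ≠ b)
    (hI : ∀ x, f x ≤ a * (1 - cdf μ x) + b * cdf μ x) (p : ℝ) (hp0 : 0 ≤ p) (hp1 : p ≤ 1) :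
    p * (1 - p) ≤ √2 * (a * (1 - p) + b * p) := by
  have : NullSingletonClass μ := by rw [hμ]; infer_instance
  have hy : ∀ u ∈ Icc (0:ℝ) 1, 0 < a * (1 - u) + b * u := by
    intro u hu
    rcases hu.1.eq_or_lt with h | h
    · rw [← h]; simpa using ha
    · have := hu.2
      have : 0 ≤ a * (1 - u) := mul_nonneg ha.le (by linarith)
      positivity
  set k : ℝ → ℝ := fun u => u * (1 - u) / (a * (1 - u) + b * u) with hk
  have hkm : Measurable k := by fun_prop
  have hkc : ContinuousOn k (Icc 0 1) :=
    ContinuousOn.div (by fun_prop) (by fun_prop) fun u hu => (hy u hu).ne'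
  have hJ : ENNReal.ofReal (∫ u in (0:ℝ)..1, k u) ≤ ENNReal.ofReal (√2 / 2) := by
    refine le_trans ?_ hG
    rw [intervalIntegral.integral_of_le zero_le_one, ← integral_Icc_eq_integral_Ioc,
      ofReal_integral_eq_lintegral_ofReal hkc.integrableOn_Icc, ← map_cdf_unif μ,
      lintegral_map hkm.ennreal_ofReal (cdf_cont μ).measurable]
    · conv_lhs => rw [hμ]
      rw [lintegral_withDensity_eq_lintegral_mul₀ hint.aemeasurable.ennreal_ofReal
        (by rw [← hμ]; exact ((hkm.comp (cdf_cont μ).measurable).ennreal_ofReal).aemeasurable)]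
      refine lintegral_mono fun x => ?_
      rw [Iio_mul_Ioi]
      simp only [Pi.mul_apply]
      rw [← hμ, ← ENNReal.ofReal_mul (hf0 x)]
      apply ENNReal.ofReal_le_ofReal
      have hu : cdf μ x ∈ Icc (0:ℝ) 1 := ⟨cdf_nonneg μ x, cdf_le_one μ x⟩
      simp only [hk]
      rw [mul_div_assoc', div_le_iff₀ (hy _ hu), mul_comm]
      exact mul_le_mul_of_nonneg_left (hI x) (mul_nonneg hu.1 (by linarith [hu.2]))
    · refine (ae_restrict_iff' measurableSet_Icc).2 (Filter.Eventually.of_forall fun u hu => ?_)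
      exact div_nonneg (mul_nonneg hu.1 (by linarith [hu.2])) (hy u hu).le
  rw [ENNReal.ofReal_le_ofReal_iff (by positivity)] at hJ
  have h1 := analytic a b ha hb hab p hp0 hp1
  have h2 := hy p ⟨hp0, hp1⟩
  have h3 := mul_le_mul_of_nonneg_left hJ (show 0 ≤ 2 * (a * (1 - p) + b * p) by linarith)
  linarith

open ProbabilityTheory Filter Topology in
lemma pointwise (f : ℝ → ℝ) (hf0 : ∀ x, 0 ≤ f x) (hlc : LC f) (hint : Integrable f) (μ : Measure ℝ) [IsProbabilityMeasure μ]
    (hμ : μ = volume.withDensity (fun x => ENNReal.ofReal (f x)))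
    (hG : ∫⁻ t, μ (Iio t) * μ (Ioi t) ≤ ENNReal.ofReal (√2 / 2)) (t : ℝ) :
    cdf μ t * (1 - cdf μ t) ≤ √2 * f t := by
  have hF : ∀ x, cdf μ x = ∫ y in Iic x, f y := by
    intro x
    rw [cdf_eq_real, measureReal_def, hμ, withDensity_apply _ measurableSet_Iic,
      ← ofReal_integral_eq_lintegral_ofReal hint.integrableOn (Eventually.of_forall hf0),
      ENNReal.toReal_ofReal (integral_nonneg hf0)]
  have hF' : ∀ x, ∫ y in t..x, f y = cdf μ x - cdf μ t := by
    intro x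
    rw [hF, hF, intervalIntegral.integral_Iic_sub_Iic hint.integrableOn hint.integrableOn]
  have h0 := cdf_nonneg μ t
  have h1 := cdf_le_one μ t
  have hs2 : 0 < √2 := by positivity
  by_cases hL : ∃ x₀ < t, 0 < f x₀
  swap
  · push Not at hL
    have : cdf μ t = 0 := by
      rw [hF, integral_Iic_eq_integral_Iio]
      refine setIntegral_eq_zero_of_forall_eq_zero fun x hx => le_antisymm (hL x hx) (hf0 x)
    rw [this, zero_mul]; exact mul_nonneg hs2.le (hf0 t)
  by_cases hR : ∃ y₀ > t, 0 < f y₀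
  swap
  · push Not at hR
    have hz : ∀ x, t ≤ x → cdf μ x = cdf μ t := by
      intro x hx
      have := hF' x
      rw [intervalIntegral.integral_of_le hx, setIntegral_eq_zero_of_forall_eq_zero
        fun y hy => le_antisymm (hR y hy.1) (hf0 y)] at this
      linarith
    have : (1:ℝ) = cdf μ t := by
      refine tendsto_nhds_unique (tendsto_cdf_atTop μ) ?_
      refine tendsto_const_nhds.congr' ?_
      filter_upwards [eventually_ge_atTop t] with x hx using (hz x hx).symm
    rw [← this, sub_self, mul_zero]; exact mul_nonneg hs2.le (hf0 t)
  obtain ⟨x₀, hx₀, hfx⟩ := hL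
  obtain ⟨y₀, hy₀, hfy⟩ := hR
  obtain ⟨s, hs⟩ := hlc.support hf0 hx₀ hy₀ hfx hfy
  have hI : ∀ x, f x ≤ f t + s * (cdf μ x - cdf μ t) := fun x => by
    rw [← hF']; exact hlc.all hf0 hint hs x
  set p := cdf μ t with hp
  have ha : 0 ≤ f t + s * (0 - p) := by
    refine ge_of_tendsto' ((((tendsto_cdf_atBot μ).sub_const p).const_mul s).const_add (f t)) fun x => ?_
    exact (hf0 x).trans (hI x)
  have hb : 0 ≤ f t + s * (1 - p) := by
    refine ge_of_tendsto' ((((tendsto_cdf_atTop μ).sub_const p).const_mul s).const_add (f t)) fun x => ?_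
    exact (hf0 x).trans (hI x)
  have main : ∀ e > 0, p * (1 - p) ≤ √2 * (f t + 2 * e) := by
    intro e he
    obtain ⟨a, ha1, ha2, ha3⟩ : ∃ a, f t + s * (0 - p) + e ≤ a ∧ a ≤ f t + s * (0 - p) + 2 * e ∧
        a ≠ f t + s * (1 - p) + e := by
      by_cases h : f t + s * (0 - p) + e = f t + s * (1 - p) + e
      · exact ⟨f t + s * (0 - p) + 2 * e, by linarith, le_rfl, fun h2 => by linarith⟩
      · exact ⟨_, le_rfl, by linarith, h⟩
    have := profile f hf0 hint μ hμ hG a (f t + s * (1 - p) + e) (by linarith) (by linarith) ha3 (fun x => by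
      have h3 := cdf_nonneg μ x
      have h4 := cdf_le_one μ x
      have h5 := hI x
      nlinarith [mul_le_mul_of_nonneg_right ha1 (sub_nonneg.2 h4)]) p h0 h1
    refine this.trans (mul_le_mul_of_nonneg_left ?_ hs2.le)
    nlinarith [mul_le_mul_of_nonneg_right ha2 (sub_nonneg.2 h1)]
  refine le_of_forall_pos_le_add fun e he => ?_
  have := main (e / (2 * √2)) (by positivity)
  refine this.trans (le_of_eq ?_)
  field_simp

/-- One-dimensional isoperimetry for isotropic logconcave densities (KLS):
for any isotropic logconcave density `f` on `ℝ` and any measurable partition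
`S₁, S₂, S₃` of `ℝ`, `π_f(S₃) ≥ (ln 2) · d(S₁,S₂) · π_f(S₁) · π_f(S₂)`, where
`d(S₁,S₂)` is the distance between `S₁` and `S₂` (formalized by quantifying over
all lower bounds `d` of the distances `|s - t|`, `s ∈ S₁`, `t ∈ S₂`). -/
theorem one_dim_isoperimetry
    (f : ℝ → ℝ) (hf0 : ∀ x, 0 ≤ f x)
    (hlc : ∀ x y : ℝ, ∀ l ∈ Icc (0:ℝ) 1,
      f x ^ l * f y ^ (1 - l) ≤ f (l * x + (1 - l) * y))
    (hint : Integrable f)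
    (hmass : ∫ x, f x = 1)
    (hmean : ∫ x, x * f x = 0)
    (hvar : ∫ x, x ^ 2 * f x = 1)
    (S₁ S₂ S₃ : Set ℝ)
    (hm₁ : MeasurableSet S₁) (hm₂ : MeasurableSet S₂) (hm₃ : MeasurableSet S₃)
    (hd₁₂ : Disjoint S₁ S₂) (hd₁₃ : Disjoint S₁ S₃) (hd₂₃ : Disjoint S₂ S₃)
    (hcover : S₁ ∪ S₂ ∪ S₃ = univ)
    (d : ℝ) (hd : 0 ≤ d) (hdist : ∀ s ∈ S₁, ∀ t ∈ S₂, d ≤ |s - t|) :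
    Real.log 2 * d * (∫ x in S₁, f x) * (∫ x in S₂, f x) ≤ ∫ x in S₃, f x := by
  have : LC f := hlc
  have hlc' := this
  set μ : Measure ℝ := volume.withDensity (fun x => ENNReal.ofReal (f x)) with hμ
  have hfm : AEMeasurable (fun x => ENNReal.ofReal (f x)) volume := hint.aemeasurable.ennreal_ofReal
  have hset : ∀ S, MeasurableSet S → μ S = ENNReal.ofReal (∫ x in S, f x) := fun S hS => by
    rw [hμ, withDensity_apply _ hS, ← ofReal_integral_eq_lintegral_ofReal hint.integrableOn
      (Filter.Eventually.of_forall hf0)]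
  have hprob : IsProbabilityMeasure μ := ⟨by
    rw [hset _ MeasurableSet.univ, Measure.restrict_univ, hmass, ENNReal.ofReal_one]⟩
  have hnull : NullSingletonClass μ := by rw [hμ]; infer_instance
  have hI2 : Integrable (fun x => x ^ 2 * f x) := by
    by_contra hcon
    rw [integral_undef hcon] at hvar
    norm_num at hvar
  have hlt : ∀ᵐ x ∂(volume : Measure ℝ), ENNReal.ofReal (f x) < ⊤ :=
    Filter.Eventually.of_forall fun x => ENNReal.ofReal_lt_top
  have hμ2 : Integrable (fun x => x ^ 2) μ := by
    rw [hμ, integrable_withDensity_iff_integrable_smul₀' hfm hlt]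
    refine hI2.congr (Filter.Eventually.of_forall fun x => ?_)
    simp only [smul_eq_mul, ENNReal.toReal_ofReal (hf0 x)]; ring
  have hμ1 : Integrable (fun x : ℝ => x) μ := by
    refine ((integrable_const (1:ℝ)).add hμ2).mono' measurable_id.aestronglyMeasurable
      (Filter.Eventually.of_forall fun x => ?_)
    simp only [Pi.add_apply, Real.norm_eq_abs]
    nlinarith [sq_nonneg (|x| - 1), sq_abs x]
  have hmom : ∀ g : ℝ → ℝ, ∫ x, g x ∂μ = ∫ x, g x * f x := fun g => by
    rw [hμ, integral_withDensity_eq_integral_toReal_smul₀ hfm hlt]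
    refine integral_congr_ae (Filter.Eventually.of_forall fun x => ?_)
    simp only [smul_eq_mul, ENNReal.toReal_ofReal (hf0 x)]; ring
  have hG := moment μ hμ1 hμ2 (by rw [hmom, hmean]) (by rw [hmom, hvar])
  have hpt := pointwise f hf0 hlc' hint μ hμ hG
  have h3 := three_set μ S₁ S₂ S₃ hm₁ hm₂ hm₃ hd₁₂ hcover d hdist
  have h4 : ∫⁻ t in S₃, μ (Iio t) * μ (Ioi t) ≤ ENNReal.ofReal (√2 * ∫ x in S₃, f x) := by
    rw [ENNReal.ofReal_mul (by positivity), ofReal_integral_eq_lintegral_ofReal hint.integrableOn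
      (Filter.Eventually.of_forall hf0), ← lintegral_const_mul' _ _ (by simp)]
    refine lintegral_mono fun t => ?_
    rw [Iio_mul_Ioi, ← ENNReal.ofReal_mul (by positivity)]
    exact ENNReal.ofReal_le_ofReal (hpt t)
  have n1 : 0 ≤ ∫ x in S₁, f x := integral_nonneg hf0
  have n2 : 0 ≤ ∫ x in S₂, f x := integral_nonneg hf0
  have n3 : 0 ≤ ∫ x in S₃, f x := integral_nonneg hf0
  have h5 := h3.trans h4
  rw [hset _ hm₁, hset _ hm₂, ← ENNReal.ofReal_mul n1, ← ENNReal.ofReal_mul hd,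
    ENNReal.ofReal_le_ofReal_iff (by positivity)] at h5
  have l0 : 0 < Real.log 2 := Real.log_pos (by norm_num)
  have hl : Real.log 2 * √2 ≤ 1 := by
    have l1 := Real.log_two_lt_d9
    have l2 : √2 ≤ 1.4143 := by
      rw [Real.sqrt_le_left (by norm_num)]; norm_num
    have l3 : 0 ≤ √2 := by positivity
    nlinarith
  have h6 := mul_le_mul_of_nonneg_left h5 l0.le
  nlinarith [mul_le_mul_of_nonneg_right hl n3]
end

section
/- Let σ > 0 and let K ⊆ ℝⁿ be a convex body with B_n ⊆ K ⊆ 4σ√n B_n, where B_n is the unit ball. Let 0 < δ ≤ σ/(8√n), let f(x) = e^{−‖x‖²/(2σ²)}, and for x ∈ K define the local conductance ℓ(x) = vol(K ∩ (x + δB_n))/vol(δB_n), and for a measurable set S define P_x(S) = (1/vol(K ∩ (x + δB_n))) ∫_{S ∩ K ∩ (x + δB_n)} min(1, f(y)/f(x)) dy. Then for any partition of K into measurable sets S and K∖S, and any u ∈ S, v ∈ K∖S with ‖u − v‖ < δ/√n, one has P_u(K∖S) + P_v(S) ≥ (1/(e(e+1))) · min{ℓ(u), ℓ(v)}. -/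
open MeasureTheory Real Set Metric
open scoped ENNReal

theorem bm1 (A B C : Set ℝ) (hA : MeasurableSet A) (hB : MeasurableSet B)
    (hAn : A.Nonempty) (hBn : B.Nonempty)
    (h : ∀ a ∈ A, ∀ b ∈ B, (a + b) / 2 ∈ C) :
    volume A + volume B ≤ 2 * volume C := by
  have key : ∀ A' ⊆ A, ∀ B' ⊆ B, IsCompact A' → IsCompact B' →
      volume A' + volume B' ≤ 2 * volume C := by
    intro A₁ hA₁ B₁ hB₁ cA₁ cB₁
    obtain ⟨a₀, ha₀⟩ := hAn
    obtain ⟨b₀, hb₀⟩ := hBn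
    obtain ⟨A', hA', cA', nA', hAA⟩ : ∃ A' ⊆ A, IsCompact A' ∧ A'.Nonempty ∧ A₁ ⊆ A' :=
      ⟨insert a₀ A₁, insert_subset ha₀ hA₁, cA₁.insert a₀, insert_nonempty _ _, subset_insert _ _⟩
    obtain ⟨B', hB', cB', nB', hBB⟩ : ∃ A' ⊆ B, IsCompact A' ∧ A'.Nonempty ∧ B₁ ⊆ A' :=
      ⟨insert b₀ B₁, insert_subset hb₀ hB₁, cB₁.insert b₀, insert_nonempty _ _, subset_insert _ _⟩
    obtain ⟨p, hpA, hp⟩ := cA'.exists_isGreatest nA'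
    obtain ⟨q, hqB, hq⟩ := cB'.exists_isLeast nB'
    have e1 : volume ((fun x => x + q) '' A') = volume A' := by
      rw [image_add_right]; exact measure_preimage_add_right _ _ _
    have e2 : volume ((fun x => p + x) '' B') = volume B' := by
      rw [image_add_left]; exact measure_preimage_add _ _ _
    have hsub : ((fun x => x + q) '' A') ∪ ((fun x => p + x) '' B') ⊆ (fun x => (2:ℝ) * x) '' C := by
      rintro z (⟨x, hx, rfl⟩ | ⟨x, hx, rfl⟩)
      · exact ⟨_, h x (hA' hx) q (hB' hqB), by simp; ring⟩
      · exact ⟨_, h p (hA' hpA) x (hB' hx), by simp; ring⟩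
    have hC : volume ((fun x => (2:ℝ) * x) '' C) = 2 * volume C := by
      have := Measure.addHaar_smul (volume : Measure ℝ) 2 C
      simpa [← image_smul] using this
    have hd : AEDisjoint volume ((fun x => x + q) '' A') ((fun x => p + x) '' B') := by
      refine measure_mono_null (t := {p + q}) ?_ (by simp)
      rintro z ⟨⟨x, hx, rfl⟩, ⟨y, hy, hxy⟩⟩
      have := hp hx
      have := hq hy
      simp at *
      linarith
    have hm : MeasurableSet ((fun x => p + x) '' B') :=
      (cB'.image (by fun_prop)).measurableSet
    calc volume A₁ + volume B₁ ≤ volume A' + volume B' := by gcongr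
      _ = volume (((fun x => x + q) '' A') ∪ ((fun x => p + x) '' B')) := by
        rw [measure_union₀ hm.nullMeasurableSet hd, e1, e2]
      _ ≤ _ := measure_mono hsub
      _ = _ := hC
  rw [hA.measure_eq_iSup_isCompact, hB.measure_eq_iSup_isCompact]
  simp only [iSup_and']
  exact ENNReal.biSup_add_biSup_le' ⟨∅, by simp⟩ ⟨∅, by simp⟩
    fun A' h1 B' h2 => key A' h1.1 B' h2.1 h1.2 h2.2

theorem pl1_core (f g h : ℝ → ℝ) (hf : Measurable f) (hg : Measurable g) (hh : Measurable h)
    (f0 : ∀ x, 0 ≤ f x) (g0 : ∀ x, 0 ≤ g x) (h0 : ∀ x, 0 ≤ h x)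
    (f1 : ∀ x, f x ≤ 1) (g1 : ∀ x, g x ≤ 1)
    (fs : ∀ t < 1, ∃ x, t < f x) (gs : ∀ t < 1, ∃ x, t < g x)
    (H : ∀ x y, f x * g y ≤ h ((x + y) / 2) ^ 2) :
    (∫⁻ x, ENNReal.ofReal (f x)) + (∫⁻ x, ENNReal.ofReal (g x)) ≤
      2 * ∫⁻ x, ENNReal.ofReal (h x) := by
  rw [lintegral_eq_lintegral_meas_lt _ (ae_of_all _ f0) hf.aemeasurable,
    lintegral_eq_lintegral_meas_lt _ (ae_of_all _ g0) hg.aemeasurable,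
    lintegral_eq_lintegral_meas_lt _ (ae_of_all _ h0) hh.aemeasurable]
  have anti : ∀ f : ℝ → ℝ, Measurable (fun t => volume {a | t < f a}) := by
    intro f
    apply Antitone.measurable
    intro s t hst
    exact measure_mono fun x hx => lt_of_le_of_lt hst hx
  rw [← lintegral_add_left (anti f), ← lintegral_const_mul _ (anti h)]
  refine setLIntegral_mono ((anti h).const_mul _) ?_
  intro t ht
  have ht : 0 < t := ht
  by_cases h1 : t < 1
  · refine bm1 _ _ _ (measurableSet_lt measurable_const hf) (measurableSet_lt measurable_const hg)
      (fs t h1) (gs t h1) ?_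
    intro a ha b hb
    have ha : t < f a := ha
    have hb : t < g b := hb
    have := H a b
    show t < _
    refine lt_of_pow_lt_pow_left₀ 2 (h0 _) ?_
    nlinarith
  · have e1 : {a | t < f a} = ∅ := by
      ext x; simp; linarith [f1 x]
    have e2 : {a | t < g a} = ∅ := by
      ext x; simp; linarith [g1 x]
    simp [e1, e2]

theorem pl1_bdd (f g h : ℝ → ℝ≥0∞) (hf : Measurable f) (hg : Measurable g) (hh : Measurable h)
    (k : ℝ≥0∞) (hk : k ≠ ⊤) (fk : ∀ x, f x ≤ k) (gk : ∀ x, g x ≤ k)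
    (H : ∀ x y, f x * g y ≤ h ((x + y) / 2) ^ 2) :
    (∫⁻ x, f x) * (∫⁻ x, g x) ≤ (∫⁻ x, h x) ^ 2 := by
  obtain ⟨a, ha⟩ : ∃ a, a = ⨆ x, f x := ⟨_, rfl⟩
  obtain ⟨b, hb⟩ : ∃ a, a = ⨆ x, g x := ⟨_, rfl⟩
  have fa : ∀ x, f x ≤ a := fun x => ha ▸ le_iSup f x
  have gb : ∀ x, g x ≤ b := fun x => hb ▸ le_iSup g x
  have at' : a ≠ ⊤ := ne_top_of_le_ne_top hk (ha ▸ iSup_le fk)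
  have bt : b ≠ ⊤ := ne_top_of_le_ne_top hk (hb ▸ iSup_le gk)
  by_cases a0 : a = 0
  · have : ∀ x, f x = 0 := fun x => by simpa [a0] using fa x
    simp [this]
  by_cases b0 : b = 0
  · have : ∀ x, g x = 0 := fun x => by simpa [b0] using gb x
    simp [this]
  have ar : 0 < a.toReal := ENNReal.toReal_pos a0 at'
  have br : 0 < b.toReal := ENNReal.toReal_pos b0 bt
  set A := a.toReal with hA
  set B := b.toReal with hB
  have eA : a = ENNReal.ofReal A := (ENNReal.ofReal_toReal at').symm
  have eB : b = ENNReal.ofReal B := (ENNReal.ofReal_toReal bt).symm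
  set c := √(A * B) with hc
  have c0 : 0 < c := Real.sqrt_pos.2 (by positivity)
  have c2 : c ^ 2 = A * B := Real.sq_sqrt (by positivity)
  have ft : ∀ x, f x ≠ ⊤ := fun x => ne_top_of_le_ne_top hk (fk x)
  have gt : ∀ x, g x ≠ ⊤ := fun x => ne_top_of_le_ne_top hk (gk x)
  set h' : ℝ → ℝ≥0∞ := fun x => min (h x) (ENNReal.ofReal c) with hh'
  have h't : ∀ x, h' x ≠ ⊤ := fun x => ne_top_of_le_ne_top ENNReal.ofReal_ne_top (min_le_right _ _)
  have H' : ∀ x y, f x * g y ≤ h' ((x + y) / 2) ^ 2 := by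
    intro x y
    simp only [hh']
    rcases le_total (h ((x + y) / 2)) (ENNReal.ofReal c) with h1 | h1
    · rw [min_eq_left h1]; exact H x y
    · rw [min_eq_right h1, ← ENNReal.ofReal_pow c0.le, c2, ENNReal.ofReal_mul ar.le, ← eA, ← eB]
      exact mul_le_mul' (fa x) (gb y)
  have core := pl1_core (fun x => (f x).toReal / A) (fun x => (g x).toReal / B)
    (fun x => (h' x).toReal / c) (hf.ennreal_toReal.div_const _) (hg.ennreal_toReal.div_const _)
    ((hh.min measurable_const).ennreal_toReal.div_const _)
    (fun x => by positivity) (fun x => by positivity) (fun x => by positivity)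
    (fun x => (div_le_one ar).2 (ENNReal.toReal_mono at' (fa x)))
    (fun x => (div_le_one br).2 (ENNReal.toReal_mono bt (gb x)))
    (fun t ht => by
      by_cases t0 : t < 0
      · exact ⟨0, t0.trans_le (by positivity)⟩
      have : ENNReal.ofReal (t * A) < ⨆ x, f x := by
        rw [← ha, eA]; exact (ENNReal.ofReal_lt_ofReal_iff ar).2 (by nlinarith)
      obtain ⟨x, hx⟩ := lt_iSup_iff.1 this
      exact ⟨x, (lt_div_iff₀ ar).2 ((ENNReal.ofReal_lt_iff_lt_toReal (by push Not at t0; positivity) (ft x)).1 hx)⟩)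
    (fun t ht => by
      by_cases t0 : t < 0
      · exact ⟨0, t0.trans_le (by positivity)⟩
      have : ENNReal.ofReal (t * B) < ⨆ x, g x := by
        rw [← hb, eB]; exact (ENNReal.ofReal_lt_ofReal_iff br).2 (by nlinarith)
      obtain ⟨x, hx⟩ := lt_iSup_iff.1 this
      exact ⟨x, (lt_div_iff₀ br).2 ((ENNReal.ofReal_lt_iff_lt_toReal (by push Not at t0; positivity) (gt x)).1 hx)⟩)
    (fun x y => by
      have := ENNReal.toReal_mono (ENNReal.pow_ne_top (h't _)) (H' x y)
      rw [ENNReal.toReal_mul, ENNReal.toReal_pow] at this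
      rw [div_pow, c2, div_mul_div_comm]
      gcongr)
  have conv : ∀ (φ : ℝ → ℝ≥0∞) (C : ℝ), 0 < C → Measurable φ → (∀ x, φ x ≠ ⊤) →
      ∫⁻ x, φ x = ENNReal.ofReal C * ∫⁻ x, ENNReal.ofReal ((φ x).toReal / C) := by
    intro φ C hC hm ht
    rw [← lintegral_const_mul _ (by fun_prop)]
    refine lintegral_congr fun x => ?_
    rw [← ENNReal.ofReal_mul hC.le, mul_div_cancel₀ _ hC.ne', ENNReal.ofReal_toReal (ht x)]
  have hle : ∫⁻ x, h' x ≤ ∫⁻ x, h x := lintegral_mono fun x => min_le_left _ _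
  refine le_trans ?_ (pow_le_pow_left' hle 2)
  rw [conv f A ar hf ft, conv g B br hg gt, conv h' c c0 (hh.min measurable_const) h't]
  generalize (∫⁻ x, ENNReal.ofReal ((f x).toReal / A)) = X at *
  generalize (∫⁻ x, ENNReal.ofReal ((g x).toReal / B)) = Y at *
  generalize (∫⁻ x, ENNReal.ofReal ((h' x).toReal / c)) = Z at *
  rw [mul_pow, ← ENNReal.ofReal_pow c0.le, c2, ENNReal.ofReal_mul ar.le, mul_mul_mul_comm]
  gcongr
  by_cases hZ : Z = ⊤
  · simp [hZ]
  have hXY : X + Y ≠ ⊤ := ne_top_of_le_ne_top (ENNReal.mul_ne_top (by simp) hZ) core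
  lift Z to NNReal using hZ
  lift X to NNReal using (fun h => hXY (by simp [h]))
  lift Y to NNReal using (fun h => hXY (by simp [h]))
  norm_cast at *
  have core' : (X:ℝ) + Y ≤ 2 * Z := by exact_mod_cast core
  have : (X:ℝ) * Y ≤ Z ^ 2 := by
    nlinarith [sq_nonneg ((X:ℝ) - Y), X.2, Y.2, Z.2, X.coe_nonneg, Y.coe_nonneg, Z.coe_nonneg]
  exact_mod_cast this

theorem pl1 (f g h : ℝ → ℝ≥0∞) (hf : Measurable f) (hg : Measurable g) (hh : Measurable h)
    (H : ∀ x y, f x * g y ≤ h ((x + y) / 2) ^ 2) :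
    (∫⁻ x, f x) * (∫⁻ x, g x) ≤ (∫⁻ x, h x) ^ 2 := by
  have lim : ∀ φ : ℝ → ℝ≥0∞, Measurable φ →
      ∫⁻ x, φ x = ⨆ k : ℕ, ∫⁻ x, min (φ x) (k : ℝ≥0∞) := by
    intro φ hφ
    rw [← lintegral_iSup (fun k => hφ.min measurable_const)]
    · refine lintegral_congr fun x => ?_
      rw [← inf_iSup_eq, ENNReal.iSup_natCast, inf_top_eq]
    · intro i j hij x
      exact min_le_min_left _ (by exact_mod_cast hij)
  rw [lim f hf, lim g hg]
  simp only [ENNReal.iSup_mul, ENNReal.mul_iSup]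
  refine iSup_le fun i => iSup_le fun j => ?_
  exact pl1_bdd _ _ h (hf.min measurable_const) (hg.min measurable_const) hh (i + j : ℕ) (by simp)
    (fun x => (min_le_right _ _).trans (by norm_cast; omega))
    (fun x => (min_le_right _ _).trans (by norm_cast; omega))
    (fun x y => le_trans (mul_le_mul' (min_le_left _ _) (min_le_left _ _)) (H x y))

/-- midpoint Prékopa–Leindler property -/
def PL (E : Type*) [AddCommGroup E] [Module ℝ E] [MeasureSpace E] : Prop :=
  ∀ f g h : E → ℝ≥0∞, Measurable f → Measurable g → Measurable h →
    (∀ x y, f x * g y ≤ h ((2⁻¹ : ℝ) • (x + y)) ^ 2) →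
    (∫⁻ x, f x) * (∫⁻ x, g x) ≤ (∫⁻ x, h x) ^ 2

theorem PL_real : PL ℝ := by
  intro f g h hf hg hh H
  refine pl1 f g h hf hg hh fun x y => ?_
  have := H x y
  rwa [smul_eq_mul, inv_mul_eq_div] at this

theorem PL_prod (E : Type*) [AddCommGroup E] [Module ℝ E] [MeasureSpace E]
    [SFinite (volume : Measure E)] (hE : PL E) : PL (ℝ × E) := by
  intro f g h hf hg hh H
  rw [Measure.volume_eq_prod, lintegral_prod _ hf.aemeasurable, lintegral_prod _ hg.aemeasurable,
    lintegral_prod _ hh.aemeasurable]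
  refine PL_real _ _ _ hf.lintegral_prod_right' hg.lintegral_prod_right' hh.lintegral_prod_right' ?_
  intro s t
  refine hE _ _ _ (by fun_prop) (by fun_prop) (by fun_prop) ?_
  intro x y
  exact H (s, x) (t, y)

theorem PL_transfer (E F : Type*) [AddCommGroup E] [Module ℝ E] [MeasureSpace E]
    [AddCommGroup F] [Module ℝ F] [MeasureSpace F] (hE : PL E)
    (e : E → F) (he : MeasurePreserving e)
    (hadd : ∀ x y, e ((2⁻¹ : ℝ) • (x + y)) = (2⁻¹ : ℝ) • (e x + e y)) : PL F := by
  intro f g h hf hg hh H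
  rw [← he.lintegral_comp hf, ← he.lintegral_comp hg, ← he.lintegral_comp hh]
  refine hE _ _ _ (hf.comp he.measurable) (hg.comp he.measurable) (hh.comp he.measurable) ?_
  intro x y
  simp only [hadd]
  exact H _ _

theorem PL_pi (n : ℕ) : PL (Fin n → ℝ) := by
  induction n with
  | zero =>
    intro f g h hf hg hh H
    rw [Measure.volume_pi_eq_dirac 0, lintegral_dirac, lintegral_dirac, lintegral_dirac]
    simpa using H 0 0
  | succ n ih =>
    refine PL_transfer (ℝ × (Fin n → ℝ)) _ (PL_prod _ ih) _
      (volume_preserving_piFinSuccAbove (fun _ : Fin (n+1) => ℝ) 0).symm ?_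
    intro x y
    ext i
    refine Fin.cases ?_ (fun j => ?_) i <;> simp [MeasurableEquiv.piFinSuccAbove] <;> ring

theorem PL_eu (n : ℕ) : PL (EuclideanSpace ℝ (Fin n)) :=
  PL_transfer _ _ (PL_pi n) _ (PiLp.volume_preserving_toLp (Fin n)) (fun x y => by simp)

theorem bm_eu (n : ℕ) (X Y Z : Set (EuclideanSpace ℝ (Fin n))) (hX : MeasurableSet X)
    (hY : MeasurableSet Y) (hZ : MeasurableSet Z)
    (H : ∀ x ∈ X, ∀ y ∈ Y, (2⁻¹ : ℝ) • (x + y) ∈ Z) :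
    volume X * volume Y ≤ volume Z ^ 2 := by
  have := PL_eu n (X.indicator 1) (Y.indicator 1) (Z.indicator 1)
    (measurable_one.indicator hX) (measurable_one.indicator hY) (measurable_one.indicator hZ) ?_
  · simpa [lintegral_indicator_one, hX, hY, hZ] using this
  · intro x y
    by_cases hx : x ∈ X
    · by_cases hy : y ∈ Y
      · rw [indicator_of_mem hx, indicator_of_mem hy, indicator_of_mem (H x hx y hy)]; simp
      · simp [hy]
    · simp [hx]

theorem geo_mid {E : Type*} [NormedAddCommGroup E] [InnerProductSpace ℝ E] (u v x y : E) (δ : ℝ)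
    (hx : ‖x - u‖ ≤ δ) (hx' : δ < ‖x - v‖) (hy : ‖y - v‖ ≤ δ) :
    ‖(2⁻¹ : ℝ) • (x + y) - u‖ ^ 2 ≤ δ ^ 2 + ‖v - u‖ ^ 2 := by
  have d0 : 0 ≤ δ := (norm_nonneg _).trans hx
  obtain ⟨p, rfl⟩ : ∃ p, x = u + p := ⟨x - u, by abel⟩
  obtain ⟨q, rfl⟩ : ∃ q, y = v + q := ⟨y - v, by abel⟩
  obtain ⟨c, rfl⟩ : ∃ c, v = u + c := ⟨v - u, by abel⟩
  have e1 : (2⁻¹ : ℝ) • (u + p + (u + c + q)) - u = (2⁻¹ : ℝ) • (q + (p + c)) := by module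
  have e2 : u + p - (u + c) = p - c := by abel
  rw [e2] at hx'
  rw [e1]
  simp only [add_sub_cancel_left] at *
  have a1 : ‖p‖ ^ 2 ≤ δ ^ 2 := by gcongr
  have a2 : δ ^ 2 < ‖p - c‖ ^ 2 := by gcongr
  have a3 : ‖q‖ ^ 2 ≤ δ ^ 2 := by gcongr
  have par := parallelogram_law_with_norm ℝ q (p + c)
  have s1 := norm_sub_sq_real p c
  have s2 := norm_add_sq_real p c
  rw [norm_smul, mul_pow]
  norm_num
  nlinarith [sq_nonneg ‖q - (p + c)‖]

theorem geo_scale {E : Type*} [NormedAddCommGroup E] [InnerProductSpace ℝ E] (w a : E) (δ t N : ℝ)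
    (hN : 1 ≤ N) (ht : t = (4 * N - 1) / (4 * N + 3)) (ha : 4 * N * ‖a‖ ^ 2 ≤ δ ^ 2)
    (h : ‖w + a‖ ^ 2 ≤ δ ^ 2 + 4 * ‖a‖ ^ 2) : ‖t • w + a‖ ^ 2 ≤ δ ^ 2 := by
  have t0 : 0 ≤ t := by rw [ht]; apply div_nonneg <;> linarith
  have t1 : t ≤ 1 := by rw [ht, div_le_one (by linarith)]; linarith
  have s1 := norm_add_sq_real w a
  have s2 := norm_add_sq_real (t • w) a
  rw [norm_smul, mul_pow, inner_smul_left] at s2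
  simp at s2
  have hw : t ^ 2 * ‖w‖ ^ 2 ≤ t * ‖w‖ ^ 2 := by
    gcongr; nlinarith
  have h3 : ‖t • w + a‖ ^ 2 ≤ t * (δ ^ 2 + 4 * ‖a‖ ^ 2) + (1 - t) * ‖a‖ ^ 2 := by
    rw [s2]
    have := mul_le_mul_of_nonneg_left h t0
    rw [s1] at this
    nlinarith
  refine h3.trans ?_
  have ht' : t * (4 * N + 3) = 4 * N - 1 := by rw [ht]; field_simp
  have h1t : (1 - t) * (4 * N + 3) = 4 := by linarith
  have : (1 - t) * (4 * N * ‖a‖ ^ 2) ≤ (1 - t) * δ ^ 2 := by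
    gcongr
  have e : (1 - t) * (4 * N * ‖a‖ ^ 2) = (1 + 3 * t) * ‖a‖ ^ 2 := by
    linear_combination ‖a‖ ^ 2 * h1t
  nlinarith

theorem overlap_vol (n : ℕ) (hn : 0 < n) (δ : ℝ)
    (K : Set (EuclideanSpace ℝ (Fin n)))
    (hKconv : Convex ℝ K) (hKcomp : IsCompact K)
    (u v : EuclideanSpace ℝ (Fin n)) (hu : u ∈ K) (hv : v ∈ K)
    (huv : (n : ℝ) * ‖u - v‖ ^ 2 ≤ δ ^ 2) (hδ : 0 < δ) :
    min (volume.real (K ∩ closedBall u δ)) (volume.real (K ∩ closedBall v δ)) ≤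
      (Real.exp (4 / 3) + 1) * volume.real (K ∩ closedBall u δ ∩ closedBall v δ) := by
  have mK : MeasurableSet K := hKcomp.isClosed.measurableSet
  have n1 : (1 : ℝ) ≤ n := by exact_mod_cast hn
  have fin : ∀ T ⊆ K, volume T ≠ ⊤ := fun T hT =>
    ne_top_of_le_ne_top hKcomp.measure_lt_top.ne (measure_mono hT)
  set R := √(δ ^ 2 + ‖v - u‖ ^ 2) with hR
  have R0 : 0 ≤ R := Real.sqrt_nonneg _
  have R2 : R ^ 2 = δ ^ 2 + ‖v - u‖ ^ 2 := Real.sq_sqrt (by positivity)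
  set I := K ∩ closedBall u δ ∩ closedBall v δ with hI
  set D := K ∩ (closedBall u R ∩ closedBall v R) with hD
  set X := (K ∩ closedBall u δ) \ closedBall v δ with hX
  set Y := (K ∩ closedBall v δ) \ closedBall u δ with hY
  have mX : MeasurableSet X := (mK.inter measurableSet_closedBall).diff measurableSet_closedBall
  have mY : MeasurableSet Y := (mK.inter measurableSet_closedBall).diff measurableSet_closedBall
  have mD : MeasurableSet D :=
    mK.inter (measurableSet_closedBall.inter measurableSet_closedBall)
  have bm : volume X * volume Y ≤ volume D ^ 2 := by
    refine bm_eu n X Y D mX mY mD ?_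
    rintro x ⟨⟨xK, xu⟩, xv⟩ y ⟨⟨yK, yv⟩, yu⟩
    simp only [mem_closedBall, dist_eq_norm, not_le] at xu xv yu yv
    refine ⟨?_, ?_, ?_⟩
    · rw [smul_add]
      exact hKconv xK yK (by norm_num) (by norm_num) (by norm_num)
    · rw [mem_closedBall, dist_eq_norm]
      refine (sq_le_sq₀ (norm_nonneg _) R0).1 ?_
      rw [R2]
      exact geo_mid u v x y δ xu xv yv
    · rw [mem_closedBall, dist_eq_norm]
      refine (sq_le_sq₀ (norm_nonneg _) R0).1 ?_
      rw [R2, norm_sub_rev v u, add_comm x y]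
      exact geo_mid v u y x δ yv yu xu
  set t : ℝ := (4 * n - 1) / (4 * n + 3) with ht
  have t0 : 0 < t := by rw [ht]; apply div_pos <;> linarith
  have t1 : t ≤ 1 := by rw [ht, div_le_one (by linarith)]; linarith
  set a := (2⁻¹ : ℝ) • (v - u) with ha
  set m := (2⁻¹ : ℝ) • (u + v) with hm
  have na : 4 * ‖a‖ ^ 2 = ‖v - u‖ ^ 2 := by
    rw [ha, norm_smul, mul_pow]; norm_num; ring
  have na' : 4 * (n : ℝ) * ‖a‖ ^ 2 ≤ δ ^ 2 := by
    rw [norm_sub_rev] at huv; nlinarith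
  have mmK : m ∈ K := by
    rw [hm, smul_add]
    exact hKconv hu hv (by norm_num) (by norm_num) (by norm_num)
  have img : AffineMap.homothety m t '' D ⊆ I := by
    rintro _ ⟨z, ⟨zK, zu, zv⟩, rfl⟩
    rw [mem_closedBall, dist_eq_norm] at zu zv
    have zu2 : ‖z - u‖ ^ 2 ≤ δ ^ 2 + 4 * ‖a‖ ^ 2 := by rw [na, ← R2]; gcongr
    have zv2 : ‖z - v‖ ^ 2 ≤ δ ^ 2 + 4 * ‖a‖ ^ 2 := by rw [na, ← R2]; gcongr
    rw [AffineMap.homothety_apply]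
    simp only [vsub_eq_sub, vadd_eq_add]
    refine ⟨⟨?_, ?_⟩, ?_⟩
    · have := hKconv zK mmK t0.le (sub_nonneg.2 t1) (by ring)
      convert this using 1
      module
    · rw [mem_closedBall, dist_eq_norm]
      refine (sq_le_sq₀ (norm_nonneg _) hδ.le).1 ?_
      have := geo_scale (z - m) a δ t n n1 ht na' (by
        rwa [show z - m + a = z - u by rw [hm, ha]; module])
      rwa [show t • (z - m) + m - u = t • (z - m) + a by rw [hm, ha]; module]
    · rw [mem_closedBall, dist_eq_norm]
      refine (sq_le_sq₀ (norm_nonneg _) hδ.le).1 ?_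
      have := geo_scale (z - m) (-a) δ t n n1 ht (by rwa [norm_neg])
        (by
          rwa [norm_neg, show z - m + -a = z - v by rw [hm, ha]; module])
      rwa [show t • (z - m) + m - v = t • (z - m) + -a by rw [hm, ha]; module]
  have sc : t ^ n * volume.real D ≤ volume.real I := by
    have h1 := measure_mono (μ := volume) img
    rw [Measure.addHaar_image_homothety, finrank_euclideanSpace_fin, abs_of_pos (by positivity)] at h1
    have h2 := ENNReal.toReal_mono (fin I (fun x hx => hx.1.1)) h1
    rwa [ENNReal.toReal_mul, ENNReal.toReal_ofReal (by positivity)] at h2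
  have tn : 1 ≤ Real.exp (4 / 3) * t ^ n := by
    have h1 : Real.exp (-(4 / (4 * n - 1))) ≤ t := by
      rw [Real.exp_neg]
      have h2 := Real.add_one_le_exp (4 / (4 * (n : ℝ) - 1))
      have h3 : 4 / (4 * (n : ℝ) - 1) + 1 = t⁻¹ := by
        have : 4 * (n : ℝ) - 1 ≠ 0 := by linarith
        rw [ht]; field_simp; ring
      rw [h3] at h2
      exact inv_le_of_inv_le₀ t0 h2
    have h2 : Real.exp (-(4 / 3)) ≤ t ^ n := by
      refine le_trans ?_ (pow_le_pow_left₀ (Real.exp_pos _).le h1 n)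
      rw [← Real.exp_nat_mul]
      apply Real.exp_le_exp.2
      have : (n : ℝ) * (4 / (4 * n - 1)) ≤ 4 / 3 := by
        rw [mul_div_assoc', div_le_div_iff₀ (by linarith) (by norm_num)]
        linarith
      linarith
    calc 1 = Real.exp (4 / 3) * Real.exp (-(4 / 3)) := by rw [← Real.exp_add]; simp
      _ ≤ _ := by gcongr
  have DI : volume.real D ≤ Real.exp (4 / 3) * volume.real I := by
    calc volume.real D ≤ (Real.exp (4 / 3) * t ^ n) * volume.real D :=
          le_mul_of_one_le_left measureReal_nonneg tn
      _ = Real.exp (4 / 3) * (t ^ n * volume.real D) := by ring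
      _ ≤ _ := by gcongr
  have bmr : volume.real X * volume.real Y ≤ volume.real D ^ 2 := by
    have := ENNReal.toReal_mono (ENNReal.pow_ne_top (fin D (fun x hx => hx.1))) bm
    rwa [ENNReal.toReal_mul, ENNReal.toReal_pow] at this
  have eA : volume.real (K ∩ closedBall u δ) = volume.real I + volume.real X :=
    (measureReal_inter_add_sdiff measurableSet_closedBall (fin _ inter_subset_left)).symm
  have eB : volume.real (K ∩ closedBall v δ) = volume.real I + volume.real Y := by
    have h1 : I = (K ∩ closedBall v δ) ∩ closedBall u δ := by rw [hI, inter_right_comm]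
    rw [h1]
    exact (measureReal_inter_add_sdiff measurableSet_closedBall (fin _ inter_subset_left)).symm
  rw [eA, eB, min_add_add_left]
  have hmin : min (volume.real X) (volume.real Y) ≤ volume.real D := by
    refine (sq_le_sq₀ (le_min measureReal_nonneg measureReal_nonneg) measureReal_nonneg).1 ?_
    refine le_trans ?_ bmr
    rw [sq]
    exact mul_le_mul (min_le_left _ _) (min_le_right _ _)
      (le_min measureReal_nonneg measureReal_nonneg) measureReal_nonneg
  linarith

theorem one_side (n : ℕ) (hn : 0 < n) (σ δ : ℝ) (hσ : 0 < σ)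
    (K : Set (EuclideanSpace ℝ (Fin n))) (hKcomp : IsCompact K)
    (hKbdd : K ⊆ closedBall (0 : EuclideanSpace ℝ (Fin n)) (4 * σ * Real.sqrt n))
    (hδσ : δ ≤ σ / (8 * Real.sqrt n))
    (f : EuclideanSpace ℝ (Fin n) → ℝ)
    (hf : ∀ x, f x = Real.exp (-‖x‖^2 / (2 * σ^2)))
    (T : Set (EuclideanSpace ℝ (Fin n))) (hT : MeasurableSet T) 
    (u v : EuclideanSpace ℝ (Fin n)) (hu : u ∈ K) :
    Real.exp (-(1 / 2)) * volume.real (T ∩ (K ∩ closedBall u δ ∩ closedBall v δ)) /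
      (volume (closedBall (0 : EuclideanSpace ℝ (Fin n)) δ)).toReal ≤
    (∫ y in T ∩ K ∩ closedBall u δ, min 1 (f y / f u)) /
      (volume (K ∩ closedBall u δ)).toReal := by
  have mK : MeasurableSet K := hKcomp.isClosed.measurableSet
  have n0 : (0 : ℝ) < n := by exact_mod_cast hn
  have sn : 0 < √(n : ℝ) := Real.sqrt_pos.2 n0
  have fin : ∀ T ⊆ K, volume T ≠ ⊤ := fun T hT =>
    ne_top_of_le_ne_top hKcomp.measure_lt_top.ne (measure_mono hT)
  have hW : MeasurableSet (T ∩ K ∩ closedBall u δ) := (hT.inter mK).inter measurableSet_closedBall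
  have hWK : T ∩ K ∩ closedBall u δ ⊆ K := fun x hx => hx.1.2
  have fc : Continuous f := by
    have : f = fun x => Real.exp (-‖x‖^2 / (2 * σ^2)) := funext hf
    rw [this]; fun_prop
  have fpos : ∀ x, 0 < f x := fun x => by rw [hf]; positivity
  have gc : Continuous (fun y => min 1 (f y / f u)) := by fun_prop
  have low : ∀ y ∈ T ∩ K ∩ closedBall u δ, Real.exp (-(1 / 2)) ≤ min 1 (f y / f u) := by
    rintro y ⟨⟨_, yK⟩, yu⟩
    refine le_min (by rw [← Real.exp_zero]; exact Real.exp_le_exp.2 (by norm_num)) ?_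
    rw [hf, hf, ← Real.exp_sub]
    apply Real.exp_le_exp.2
    have h1 := hKbdd yK
    have h2 := hKbdd hu
    rw [mem_closedBall, dist_zero_right] at h1 h2
    rw [mem_closedBall, dist_eq_norm] at yu
    have h3 := (norm_sub_norm_le y u).trans (yu.trans hδσ)
    have h4 : ‖y‖ ^ 2 - ‖u‖ ^ 2 ≤ σ ^ 2 := by
      calc ‖y‖ ^ 2 - ‖u‖ ^ 2 = (‖y‖ - ‖u‖) * (‖y‖ + ‖u‖) := by ring
        _ ≤ (σ / (8 * √(n : ℝ))) * (‖y‖ + ‖u‖) := by gcongr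
        _ ≤ (σ / (8 * √(n : ℝ))) * (4 * σ * √(n : ℝ) + 4 * σ * √(n : ℝ)) := by gcongr
        _ = σ ^ 2 := by field_simp; ring
    have h5 : -‖y‖ ^ 2 / (2 * σ ^ 2) - -‖u‖ ^ 2 / (2 * σ ^ 2) =
      -((‖y‖ ^ 2 - ‖u‖ ^ 2) / σ ^ 2 / 2) := by field_simp; ring
    rw [h5]
    have h6 : (‖y‖ ^ 2 - ‖u‖ ^ 2) / σ ^ 2 ≤ 1 := (div_le_one (by positivity)).2 h4
    linarith
  have h1 : Real.exp (-(1 / 2)) * volume.real (T ∩ K ∩ closedBall u δ) ≤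
      ∫ y in T ∩ K ∩ closedBall u δ, min 1 (f y / f u) := by
    have := setIntegral_mono_on (μ := volume) (f := fun _ => Real.exp (-(1 / 2)))
      (integrableOn_const (fin _ hWK))
      ((gc.continuousOn.integrableOn_compact hKcomp).mono_set hWK) hW low
    simpa [mul_comm] using this
  have h2 : volume.real (T ∩ (K ∩ closedBall u δ ∩ closedBall v δ)) ≤
      volume.real (T ∩ K ∩ closedBall u δ) :=
    measureReal_mono (fun x hx => ⟨⟨hx.1, hx.2.1.1⟩, hx.2.1.2⟩) (fin _ hWK)
  have h3 : volume.real (T ∩ (K ∩ closedBall u δ ∩ closedBall v δ)) ≤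
      volume.real (K ∩ closedBall u δ) :=
    measureReal_mono (fun x hx => hx.2.1) (fin _ inter_subset_left)
  have h4 : volume.real (K ∩ closedBall u δ) ≤
      volume.real (closedBall (0 : EuclideanSpace ℝ (Fin n)) δ) := by
    have : volume (closedBall (0 : EuclideanSpace ℝ (Fin n)) δ) = volume (closedBall u δ) :=
      (Measure.addHaar_closedBall_center volume u δ).symm
    rw [measureReal_def, measureReal_def, this]
    exact ENNReal.toReal_mono measure_closedBall_lt_top.ne (measure_mono inter_subset_right)
  change _ / volume.real (closedBall (0 : EuclideanSpace ℝ (Fin n)) δ) ≤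
    _ / volume.real (K ∩ closedBall u δ)
  have h0 : 0 ≤ volume.real (T ∩ (K ∩ closedBall u δ ∩ closedBall v δ)) := measureReal_nonneg
  rcases (measureReal_nonneg (μ := volume) (s := K ∩ closedBall u δ)).eq_or_lt with hz | hz
  · rw [← hz] at h3
    rw [le_antisymm h3 h0, ← hz]; simp
  · refine div_le_div₀ ?_ ?_ hz h4
    · exact le_trans (by positivity) h1
    · exact le_trans (by gcongr) h1

/-- Overlap lemma for the speedy walk with Metropolis filter (Lemma 5.1 of the paper):
for a convex body `K` with `B_n ⊆ K ⊆ 4σ√n B_n`, step size `δ ≤ σ/(8√n)`, Gaussian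
weight `f(x) = e^{-‖x‖²/(2σ²)}`, local conductance `ℓ` and one-step distribution `P`,
if `S, K∖S` partition `K` and `u ∈ S`, `v ∈ K∖S` with `‖u - v‖ < δ/√n`, then
`P_u(K∖S) + P_v(S) ≥ min{ℓ(u), ℓ(v)} / (e(e+1))`. -/
theorem speedy_overlap
    (n : ℕ) (σ δ : ℝ) (hσ : 0 < σ)
    (K : Set (EuclideanSpace ℝ (Fin n)))
    (hKconv : Convex ℝ K) (hKcomp : IsCompact K)
    (hKball : closedBall (0 : EuclideanSpace ℝ (Fin n)) 1 ⊆ K)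
    (hKbdd : K ⊆ closedBall (0 : EuclideanSpace ℝ (Fin n)) (4 * σ * Real.sqrt n))
    (hδ : 0 < δ) (hδσ : δ ≤ σ / (8 * Real.sqrt n))
    (f : EuclideanSpace ℝ (Fin n) → ℝ)
    (hf : ∀ x, f x = Real.exp (-‖x‖^2 / (2 * σ^2)))
    (ℓ : EuclideanSpace ℝ (Fin n) → ℝ)
    (hℓ : ∀ x, ℓ x = (volume (K ∩ closedBall x δ)).toReal /
      (volume (closedBall (0 : EuclideanSpace ℝ (Fin n)) δ)).toReal)
    (P : EuclideanSpace ℝ (Fin n) → Set (EuclideanSpace ℝ (Fin n)) → ℝ)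
    (hP : ∀ x S, P x S = (∫ y in S ∩ K ∩ closedBall x δ, min 1 (f y / f x)) /
      (volume (K ∩ closedBall x δ)).toReal)
    (S : Set (EuclideanSpace ℝ (Fin n))) (hS : MeasurableSet S) (hSK : S ⊆ K)
    (u v : EuclideanSpace ℝ (Fin n)) (hu : u ∈ S) (hv : v ∈ K \ S)
    (huv : ‖u - v‖ < δ / Real.sqrt n) :
    (1 / (Real.exp 1 * (Real.exp 1 + 1))) * min (ℓ u) (ℓ v) ≤ P u (K \ S) + P v S := by
  have hn : 0 < n := by
    rcases Nat.eq_zero_or_pos n with h | h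
    · subst h
      simp at hδσ
      linarith
    · exact h
  have n0 : (0 : ℝ) < n := by exact_mod_cast hn
  have sn : 0 < √(n : ℝ) := Real.sqrt_pos.2 n0
  have mK : MeasurableSet K := hKcomp.isClosed.measurableSet
  have hsq : (n : ℝ) * ‖u - v‖ ^ 2 ≤ δ ^ 2 := by
    have h1 : ‖u - v‖ * √(n : ℝ) ≤ δ := ((lt_div_iff₀ sn).1 huv).le
    have h2 : (‖u - v‖ * √(n : ℝ)) ^ 2 ≤ δ ^ 2 := by gcongr
    rw [mul_pow, Real.sq_sqrt n0.le] at h2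
    linarith
  have hov := overlap_vol n hn δ K hKconv hKcomp u v (hSK hu) hv.1 hsq hδ
  have pu := one_side n hn σ δ hσ K hKcomp hKbdd hδσ f hf (K \ S) (mK.diff hS) u v (hSK hu)
  have pv := one_side n hn σ δ hσ K hKcomp hKbdd hδσ f hf S hS v u hv.1
  rw [← hP] at pu pv
  set I := K ∩ closedBall u δ ∩ closedBall v δ with hI
  have hI' : K ∩ closedBall v δ ∩ closedBall u δ = I := by rw [hI, inter_right_comm]
  rw [hI'] at pv
  have Ifin : volume I ≠ ⊤ :=
    ne_top_of_le_ne_top hKcomp.measure_lt_top.ne (measure_mono fun x hx => hx.1.1)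
  have hsum : volume.real ((K \ S) ∩ I) + volume.real (S ∩ I) = volume.real I := by
    have e1 : (K \ S) ∩ I = I \ S := by
      ext x; constructor
      · rintro ⟨h1, h2⟩; exact ⟨h2, h1.2⟩
      · rintro ⟨h1, h2⟩; exact ⟨⟨h1.1.1, h2⟩, h1⟩
    rw [e1, inter_comm S I, add_comm]
    exact measureReal_inter_add_sdiff hS Ifin
  refine le_trans ?_ (add_le_add pu pv)
  rw [← add_div, ← mul_add, hsum, hℓ, hℓ]
  set V := (volume (closedBall (0 : EuclideanSpace ℝ (Fin n)) δ)).toReal with hV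
  have V0 : 0 ≤ V := ENNReal.toReal_nonneg
  rw [min_div_div_right V0, mul_div_assoc']
  refine div_le_div_of_nonneg_right ?_ V0
  change _ * min (volume.real _) (volume.real _) ≤ _
  have I0 : 0 ≤ volume.real I := measureReal_nonneg
  rw [one_div, inv_mul_le_iff₀ (by positivity)]
  refine hov.trans ?_
  rw [← mul_assoc]
  refine mul_le_mul_of_nonneg_right ?_ I0
  have e1 : Real.exp 1 * (Real.exp 1 + 1) * Real.exp (-(1 / 2)) =
      Real.exp (3 / 2) + Real.exp (1 / 2) := by
    rw [mul_add, add_mul, mul_one, ← Real.exp_add, ← Real.exp_add, ← Real.exp_add]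
    norm_num
  rw [e1]
  have := Real.exp_le_exp.2 (show (4 / 3 : ℝ) ≤ 3 / 2 by norm_num)
  have := Real.one_le_exp (show (0 : ℝ) ≤ 1 / 2 by norm_num)
  linarith
end

section
/- Let σ > 0 and let K ⊆ ℝⁿ be a convex body with B_n ⊆ K ⊆ 4σ√n B_n. Let 0 < δ ≤ σ/(8√n), let f(x) = e^{−‖x‖²/(2σ²)}, and for x ∈ K define ℓ(x) = vol(K ∩ (x + δB_n))/vol(δB_n) and P_x(S) = (1/vol(K ∩ (x + δB_n))) ∫_{S ∩ K ∩ (x + δB_n)} min(1, f(y)/f(x)) dy. Let S, K∖S be a partition of K and let u ∈ S, v ∈ K∖S satisfy ‖u − v‖ < δ/√n, P_u(K∖S) ≤ ℓ(u)/(20e), and P_v(S) ≤ ℓ(v)/(20e). Then |ℓ(u)f(u) − ℓ(v)f(v)| / max{ℓ(u)f(u), ℓ(v)f(v)} ≥ 1/4. -/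
open MeasureTheory Real Set Metric

lemma bm_compact (A B C : Set ℝ) (hA : IsCompact A) (hB : IsCompact B)
    (hA0 : A.Nonempty) (hB0 : B.Nonempty)
    (h : ∀ x ∈ A, ∀ y ∈ B, (1/2:ℝ) * (x + y) ∈ C) :
    volume A + volume B ≤ 2 * volume C := by
  obtain ⟨α, hα, hα'⟩ := hA.exists_isGreatest hA0
  obtain ⟨β, hβ, hβ'⟩ := hB.exists_isLeast hB0
  set D : Set ℝ := (fun z : ℝ => (1/2:ℝ) * z) ⁻¹' C with hD
  have hvD : volume D = 2 * volume C := by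
    rw [hD, Real.volume_preimage_mul_left (by norm_num)]
    norm_num
  have h1 : volume A ≤ volume (D ∩ Iic (α + β)) := by
    rw [← measure_preimage_add_right volume β (D ∩ Iic (α + β))]
    refine measure_mono fun x hx => ⟨h x hx β hβ, ?_⟩
    have := hα' hx
    simp only [mem_Iic]; linarith
  have h2 : volume B ≤ volume (D \ Iic (α + β)) := by
    have : volume B ≤ volume (D ∩ Ici (α + β)) := by
      rw [← measure_preimage_add_right volume α (D ∩ Ici (α + β))]
      refine measure_mono fun x hx => ⟨?_, ?_⟩
      · have := h α hα x hx
        simp only [hD, mem_preimage]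
        rwa [add_comm x α]
      · have := hβ' hx
        simp only [mem_Ici]; linarith
    refine this.trans ?_
    calc volume (D ∩ Ici (α + β)) ≤ volume ((D \ Iic (α + β)) ∪ {α + β}) := by
          refine measure_mono fun x hx => ?_
          rcases eq_or_lt_of_le (mem_Ici.1 hx.2) with h | h
          · right; exact h.symm
          · left; exact ⟨hx.1, not_le.2 h⟩
      _ ≤ volume (D \ Iic (α + β)) + volume {α + β} := measure_union_le _ _
      _ = _ := by simp
  calc volume A + volume B ≤ _ := add_le_add h1 h2
    _ = volume D := measure_inter_add_sdiff D measurableSet_Iic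
    _ = _ := hvD

lemma bm_aux (A A' : Set ℝ) (hA0 : A.Nonempty) :
    ∃ A'' ⊆ A, IsCompact A'' ∧ A''.Nonempty ∧
      (⨆ (_ : A' ⊆ A) (_ : IsCompact A'), volume A') ≤ volume A'' := by
  obtain ⟨a, ha⟩ := hA0
  by_cases hc : A' ⊆ A ∧ IsCompact A'
  · refine ⟨insert a A', insert_subset ha hc.1, hc.2.insert a, insert_nonempty _ _, ?_⟩
    exact iSup_le fun _ => iSup_le fun _ => measure_mono (subset_insert _ _)
  · refine ⟨{a}, singleton_subset_iff.2 ha, isCompact_singleton, singleton_nonempty a, ?_⟩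
    exact iSup_le fun h1 => iSup_le fun h2 => absurd ⟨h1, h2⟩ hc

lemma bm_meas (A B C : Set ℝ) (hA : MeasurableSet A) (hB : MeasurableSet B)
    (hA0 : A.Nonempty) (hB0 : B.Nonempty)
    (h : ∀ x ∈ A, ∀ y ∈ B, (1/2:ℝ) * (x + y) ∈ C) :
    volume A + volume B ≤ 2 * volume C := by
  rw [hA.measure_eq_iSup_isCompact, hB.measure_eq_iSup_isCompact]
  refine ENNReal.iSup_add_iSup_le (fun A' B' => ?_)
  obtain ⟨A1, h1, h2, h3, h4⟩ := bm_aux A A' hA0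
  obtain ⟨B1, k1, k2, k3, k4⟩ := bm_aux B B' hB0
  exact (add_le_add h4 k4).trans (bm_compact A1 B1 C h2 k2 h3 k3
    fun x hx y hy => h x (h1 hx) y (k1 hy))

lemma pl_core (f g h : ℝ → ℝ) (hf : Measurable f) (hg : Measurable g) (hh : Measurable h)
    (f0 : ∀ x, 0 ≤ f x) (g0 : ∀ x, 0 ≤ g x) (h0 : ∀ x, 0 ≤ h x)
    (f1 : ∀ x, f x ≤ 1) (g1 : ∀ x, g x ≤ 1)
    (fs : ∀ t < 1, ∃ x, t < f x) (gs : ∀ t < 1, ∃ x, t < g x)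
    (H : ∀ x y, f x * g y ≤ h ((1/2:ℝ) * (x + y)) ^ 2) :
    (∫⁻ x, ENNReal.ofReal (f x)) + (∫⁻ x, ENNReal.ofReal (g x))
      ≤ 2 * ∫⁻ x, ENNReal.ofReal (h x) := by
  rw [lintegral_eq_lintegral_meas_lt volume (.of_forall f0) hf.aemeasurable,
    lintegral_eq_lintegral_meas_lt volume (.of_forall g0) hg.aemeasurable,
    lintegral_eq_lintegral_meas_lt volume (.of_forall h0) hh.aemeasurable]
  have hm : Measurable fun t => volume {a | t < f a} :=
    Antitone.measurable fun s t hst => measure_mono fun x (hx : t < f x) => lt_of_le_of_lt hst hx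
  rw [← lintegral_add_left hm, ← lintegral_const_mul' _ _ (by simp)]
  refine setLIntegral_mono' measurableSet_Ioi fun t ht => ?_
  have ht : 0 < t := ht
  rcases lt_or_ge t 1 with h1 | h1
  · refine bm_meas _ _ _ (measurableSet_lt measurable_const hf)
      (measurableSet_lt measurable_const hg) (fs t h1) (gs t h1) fun x hx y hy => ?_
    have hx : t < f x := hx
    have hy : t < g y := hy
    have := H x y
    show t < h _
    refine lt_of_pow_lt_pow_left₀ 2 (h0 _) (lt_of_lt_of_le ?_ this)
    nlinarith
  · have e1 : {a | t < f a} = ∅ := by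
      ext x; simpa using (f1 x).trans h1
    have e2 : {a | t < g a} = ∅ := by
      ext x; simpa using (g1 x).trans h1
    simp [e1, e2]


open scoped ENNReal

lemma ennreal_amgm (x y : ℝ≥0∞) : 4 * (x * y) ≤ (x + y) ^ 2 := by
  by_cases hx : x = ⊤
  · simp [hx]
  by_cases hy : y = ⊤
  · simp [hy]
  lift x to NNReal using hx
  lift y to NNReal using hy
  have : 4 * (x * y) ≤ (x + y) ^ 2 := by
    rw [← NNReal.coe_le_coe]; push_cast
    nlinarith [sq_nonneg ((x:ℝ) - y)]
  exact_mod_cast this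

lemma sup_norm_aux (f : ℝ → ℝ≥0∞) (a : ℝ≥0∞) (ha : a = ⨆ x, f x) (a0 : a ≠ 0) (a1 : a ≠ ⊤)
    (t : ℝ) (ht : t < 1) : ∃ x, t < (f x * a⁻¹).toReal := by
  have hle : ∀ x, f x * a⁻¹ ≤ 1 := fun x => by
    rw [← ENNReal.mul_inv_cancel a0 a1]; gcongr; rw [ha]; exact le_iSup f x
  rcases lt_or_ge t 0 with h | h
  · exact ⟨0, h.trans_le ENNReal.toReal_nonneg⟩
  · have : ENNReal.ofReal t * a < a := by
      calc ENNReal.ofReal t * a < 1 * a := by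
            rw [ENNReal.mul_lt_mul_iff_left a0 a1]
            simpa using ht
        _ = a := one_mul a
    conv_rhs at this => rw [ha]
    obtain ⟨x, hx⟩ := lt_iSup_iff.1 this
    refine ⟨x, ?_⟩
    rw [← ENNReal.ofReal_lt_iff_lt_toReal h (ne_top_of_le_ne_top (by simp) (hle x))]
    rw [← div_eq_mul_inv, ENNReal.lt_div_iff_mul_lt (Or.inl a0) (Or.inl a1)]
    exact hx

lemma pl_bdd (f g h : ℝ → ℝ≥0∞) (hf : Measurable f) (hg : Measurable g) (hh : Measurable h)
    (k : ℝ≥0∞) (hk : k ≠ ⊤) (fk : ∀ x, f x ≤ k) (gk : ∀ x, g x ≤ k)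
    (H : ∀ x y, f x * g y ≤ h ((1/2:ℝ) * (x + y)) ^ 2) :
    (∫⁻ x, f x) * (∫⁻ x, g x) ≤ (∫⁻ x, h x) ^ 2 := by
  obtain ⟨a, ha⟩ : ∃ a, a = ⨆ x, f x := ⟨_, rfl⟩
  obtain ⟨b, hb⟩ : ∃ a, a = ⨆ x, g x := ⟨_, rfl⟩
  by_cases a0 : a = 0
  · have : ∀ x, f x = 0 := fun x => le_antisymm ((le_iSup f x).trans (by rw [← ha, a0])) bot_le
    simp [this]
  by_cases b0 : b = 0
  · have : ∀ x, g x = 0 := fun x => le_antisymm ((le_iSup g x).trans (by rw [← hb, b0])) bot_le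
    simp [this]
  have a1 : a ≠ ⊤ := ne_top_of_le_ne_top hk (ha ▸ iSup_le fk)
  have b1 : b ≠ ⊤ := ne_top_of_le_ne_top hk (hb ▸ iSup_le gk)
  have fa : ∀ x, f x ≤ a := fun x => ha ▸ le_iSup f x
  have gb : ∀ x, g x ≤ b := fun x => hb ▸ le_iSup g x
  obtain ⟨c, hc⟩ : ∃ c : ℝ≥0∞, c ^ 2 = a * b :=
    ⟨(a * b) ^ (1/2:ℝ), by rw [← ENNReal.rpow_natCast, ← ENNReal.rpow_mul]; norm_num⟩
  have c0 : c ≠ 0 := by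
    rintro rfl
    simp [a0, b0] at hc
  have c1 : c ≠ ⊤ := by
    rintro rfl
    have := ENNReal.mul_ne_top a1 b1
    rw [← hc] at this
    simp at this
  have fle : ∀ x, f x * a⁻¹ ≤ 1 := fun x => by
    rw [← ENNReal.mul_inv_cancel a0 a1]; gcongr; exact fa x
  have gle : ∀ x, g x * b⁻¹ ≤ 1 := fun x => by
    rw [← ENNReal.mul_inv_cancel b0 b1]; gcongr; exact gb x
  have hcinv : (c⁻¹) ^ 2 = a⁻¹ * b⁻¹ := by
    rw [← ENNReal.mul_inv (Or.inl a0) (Or.inl a1), ← hc, ENNReal.inv_pow]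
  have core := pl_core (fun x => (f x * a⁻¹).toReal) (fun x => (g x * b⁻¹).toReal)
    (fun x => (min (h x * c⁻¹) 1).toReal) (by fun_prop) (by fun_prop) (by fun_prop)
    (fun _ => ENNReal.toReal_nonneg) (fun _ => ENNReal.toReal_nonneg)
    (fun _ => ENNReal.toReal_nonneg)
    (fun x => ENNReal.toReal_le_of_le_ofReal zero_le_one (by simpa using fle x))
    (fun x => ENNReal.toReal_le_of_le_ofReal zero_le_one (by simpa using gle x))
    (sup_norm_aux f a ha a0 a1) (sup_norm_aux g b hb b0 b1)
    (by
      intro x y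
      rw [← ENNReal.toReal_mul, ← ENNReal.toReal_pow]
      refine ENNReal.toReal_mono (ENNReal.pow_ne_top (ne_top_of_le_ne_top (by simp) (min_le_right _ 1))) ?_
      rcases le_total (h ((1/2:ℝ) * (x + y)) * c⁻¹) 1 with h1 | h1
      · rw [min_eq_left h1, mul_pow, hcinv]
        calc f x * a⁻¹ * (g y * b⁻¹) = f x * g y * (a⁻¹ * b⁻¹) := by ring
          _ ≤ _ := by gcongr; exact H x y
      · rw [min_eq_right h1]
        simpa using mul_le_mul' (fle x) (gle y))
  have e1 : ∀ x, ENNReal.ofReal ((f x * a⁻¹).toReal) = f x * a⁻¹ := fun x =>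
    ENNReal.ofReal_toReal (ne_top_of_le_ne_top (by simp) (fle x))
  have e2 : ∀ x, ENNReal.ofReal ((g x * b⁻¹).toReal) = g x * b⁻¹ := fun x =>
    ENNReal.ofReal_toReal (ne_top_of_le_ne_top (by simp) (gle x))
  have e3 : ∀ x, ENNReal.ofReal ((min (h x * c⁻¹) 1).toReal) = min (h x * c⁻¹) 1 := fun x =>
    ENNReal.ofReal_toReal (ne_top_of_le_ne_top (by simp) (min_le_right _ 1))
  simp only [e1, e2, e3] at core
  have core2 := core.trans (mul_le_mul_right (lintegral_mono fun x => min_le_left (h x * c⁻¹) 1) 2)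
  rw [lintegral_mul_const _ hf, lintegral_mul_const _ hg, lintegral_mul_const _ hh] at core2
  set I := ∫⁻ x, f x
  set J := ∫⁻ x, g x
  set L := ∫⁻ x, h x
  have h4 := (ennreal_amgm (I * a⁻¹) (J * b⁻¹)).trans (pow_le_pow_left₀ (by simp) core2 2)
  have h5 : 4 * (a⁻¹ * b⁻¹) * (I * J) ≤ 4 * (a⁻¹ * b⁻¹) * L ^ 2 := by
    calc _ = 4 * (I * a⁻¹ * (J * b⁻¹)) := by ring
      _ ≤ _ := h4
      _ = 4 * c⁻¹ ^ 2 * L ^ 2 := by ring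
      _ = _ := by rw [hcinv]
  refine (ENNReal.mul_le_mul_iff_right ?_ ?_).1 h5
  · simp [a1, b1]
  · exact ENNReal.mul_ne_top (by simp) (ENNReal.mul_ne_top (by simp [a0]) (by simp [b0]))

lemma pl_one (f g h : ℝ → ℝ≥0∞) (hf : Measurable f) (hg : Measurable g) (hh : Measurable h)
    (H : ∀ x y, f x * g y ≤ h ((1/2:ℝ) * (x + y)) ^ 2) :
    (∫⁻ x, f x) * (∫⁻ x, g x) ≤ (∫⁻ x, h x) ^ 2 := by
  have key : ∀ f : ℝ → ℝ≥0∞, Measurable f →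
      Filter.Tendsto (fun k : ℕ => ∫⁻ x, min (f x) k) Filter.atTop (nhds (∫⁻ x, f x)) := by
    intro f hf
    refine lintegral_tendsto_of_tendsto_of_monotone (fun k => by fun_prop)
      (.of_forall fun x k l hkl => ?_) (.of_forall fun x => ?_)
    · dsimp only; gcongr
    · have : Filter.Tendsto (fun k : ℕ => min (f x) k) Filter.atTop (nhds (min (f x) ⊤)) :=
        Filter.Tendsto.min tendsto_const_nhds ENNReal.tendsto_nat_nhds_top
      simpa using this
  by_cases hi : (∫⁻ x, f x) = 0
  · simp [hi]
  by_cases hj : (∫⁻ x, g x) = 0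
  · simp [hj]
  refine le_of_tendsto (ENNReal.Tendsto.mul (key f hf) (Or.inl hi) (key g hg) (Or.inl hj))
    (.of_forall fun k => ?_)
  refine pl_bdd _ _ h (by fun_prop) (by fun_prop) hh k (by simp)
    (fun x => min_le_right _ _) (fun x => min_le_right _ _) fun x y => ?_
  exact (mul_le_mul' (min_le_left _ _) (min_le_left _ _)).trans (H x y)

lemma pl_pi (n : ℕ) : ∀ (f g h : (Fin n → ℝ) → ℝ≥0∞), Measurable f → Measurable g →
    Measurable h → (∀ x y, f x * g y ≤ h ((1/2:ℝ) • (x + y)) ^ 2) →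
    (∫⁻ x, f x) * (∫⁻ x, g x) ≤ (∫⁻ x, h x) ^ 2 := by
  induction n with
  | zero =>
    intro f g h hf hg hh H
    rw [Measure.volume_pi_eq_dirac 0]
    simp only [lintegral_dirac]
    simpa using H 0 0
  | succ n ih =>
    intro f g h hf hg hh H
    let e := MeasurableEquiv.piFinSuccAbove (fun _ : Fin (n+1) => ℝ) 0
    have he : MeasurePreserving e.symm :=
      (volume_preserving_piFinSuccAbove (fun _ : Fin (n+1) => ℝ) 0).symm
    have key : ∀ f : (Fin (n+1) → ℝ) → ℝ≥0∞, Measurable f →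
        ∫⁻ x, f x = ∫⁻ s : ℝ, ∫⁻ z : Fin n → ℝ, f (e.symm (s, z)) := by
      intro f hf
      rw [← he.lintegral_comp hf]
      exact lintegral_prod _ (hf.comp e.symm.measurable).aemeasurable
    rw [key f hf, key g hg, key h hh]
    have hm : ∀ f : (Fin (n+1) → ℝ) → ℝ≥0∞, Measurable f →
        Measurable fun p : ℝ × (Fin n → ℝ) => f (e.symm p) :=
      fun f hf => hf.comp e.symm.measurable
    refine pl_one _ _ _ (hm f hf).lintegral_prod_right' (hm g hg).lintegral_prod_right'
      (hm h hh).lintegral_prod_right' fun s t => ?_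
    refine ih _ _ _ ((hm f hf).comp measurable_prodMk_left)
      ((hm g hg).comp measurable_prodMk_left) ((hm h hh).comp measurable_prodMk_left) fun x y => ?_
    convert H (e.symm (s, x)) (e.symm (t, y)) using 3
    ext i
    refine Fin.cases ?_ (fun j => ?_) i <;> simp [e, MeasurableEquiv.piFinSuccAbove, mul_add]

lemma bm_euclid (n : ℕ) (A B C : Set (EuclideanSpace ℝ (Fin n))) (hA : MeasurableSet A)
    (hB : MeasurableSet B) (hC : MeasurableSet C)
    (h : ∀ x ∈ A, ∀ y ∈ B, (1/2:ℝ) • (x + y) ∈ C) :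
    volume A * volume B ≤ volume C ^ 2 := by
  have hp := PiLp.volume_preserving_toLp (Fin n)
  have key : ∀ A : Set (EuclideanSpace ℝ (Fin n)), MeasurableSet A →
      volume A = ∫⁻ x : Fin n → ℝ, (A.indicator 1 (WithLp.toLp 2 x) : ℝ≥0∞) := by
    intro A hA
    rw [hp.lintegral_comp (measurable_one.indicator hA), lintegral_indicator_one hA]
  rw [key A hA, key B hB, key C hC]
  have hm : ∀ A : Set (EuclideanSpace ℝ (Fin n)), MeasurableSet A →
      Measurable fun x : Fin n → ℝ => (A.indicator 1 (WithLp.toLp 2 x) : ℝ≥0∞) :=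
    fun A hA => (measurable_one.indicator hA).comp hp.measurable
  refine pl_pi n _ _ _ (hm A hA) (hm B hB) (hm C hC) fun x y => ?_
  by_cases hx : WithLp.toLp 2 x ∈ A
  · by_cases hy : WithLp.toLp 2 y ∈ B
    · have := h _ hx _ hy
      rw [← WithLp.toLp_add, ← WithLp.toLp_smul] at this
      rw [indicator_of_mem hx, indicator_of_mem hy, indicator_of_mem this]
      simp
    · simp [hy]
  · simp [hx]

lemma geom_aux {E : Type*} [NormedAddCommGroup E] [InnerProductSpace ℝ E]
    (p q d : E) (δ N : ℝ) (hδ : 0 < δ) (hN : 1 ≤ N) (hd : N * ‖d‖ ^ 2 ≤ δ ^ 2)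
    (hp : ‖p‖ ≤ δ) (hq : ‖q‖ ≤ δ) (hpd : -‖d‖ ^ 2 ≤ 2 * inner ℝ p d) :
    ‖((4 * N - 1) / (4 * N + 3)) • ((1/2:ℝ) • (p + q - d)) +
      (1 - (4 * N - 1) / (4 * N + 3)) • (-(1/2:ℝ) • d)‖ ≤ δ := by
  set r := (4 * N - 1) / (4 * N + 3) with hr
  have hr0 : 0 ≤ r := by apply div_nonneg <;> linarith
  have hr1 : r ≤ 1 := by rw [hr, div_le_one (by linarith)]; linarith
  set W := (1/2:ℝ) • (p + q - d) with hW
  have hp2 : ‖p‖ ^ 2 ≤ δ ^ 2 := by gcongr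
  have hq2 : ‖q‖ ^ 2 ≤ δ ^ 2 := by gcongr
  have hw : ‖W‖ ^ 2 ≤ δ ^ 2 + ‖d‖ ^ 2 := by
    have e1 : ‖W‖ ^ 2 = (1/4) * ‖p + q - d‖ ^ 2 := by
      rw [hW, norm_smul, mul_pow]; norm_num
    have e2 : ‖p + q - d‖ ^ 2 = ‖p‖^2 + ‖q‖^2 + ‖d‖^2 + 2 * inner ℝ p q - 2 * inner ℝ p d
        - 2 * inner ℝ q d := by
      rw [norm_sub_sq_real, norm_add_sq_real, inner_add_left]; ring
    have e3 : ‖p - q - d‖ ^ 2 = ‖p‖^2 + ‖q‖^2 + ‖d‖^2 - 2 * inner ℝ p q - 2 * inner ℝ p d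
        + 2 * inner ℝ q d := by
      rw [norm_sub_sq_real, norm_sub_sq_real, inner_sub_left]; ring
    have e4 := sq_nonneg ‖p - q - d‖
    rw [e1, e2]
    linarith
  have h2 : ‖-(1/2:ℝ) • d‖ ^ 2 = (1/4) * ‖d‖ ^ 2 := by
    rw [norm_smul, mul_pow]; norm_num
  refine (sq_le_sq₀ (norm_nonneg _) hδ.le).1 ?_
  have hconv : ‖r • W + (1 - r) • (-(1/2:ℝ) • d)‖ ^ 2 ≤
      r * ‖W‖ ^ 2 + (1 - r) * ‖-(1/2:ℝ) • d‖ ^ 2 := by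
    have h1 : ‖r • W + (1 - r) • (-(1/2:ℝ) • d)‖ ≤ r * ‖W‖ + (1 - r) * ‖-(1/2:ℝ) • d‖ := by
      refine (norm_add_le _ _).trans ?_
      rw [norm_smul r, norm_smul (1 - r), Real.norm_of_nonneg hr0, Real.norm_of_nonneg (by linarith)]
    refine (pow_le_pow_left₀ (norm_nonneg _) h1 2).trans ?_
    nlinarith [mul_nonneg (mul_nonneg hr0 (sub_nonneg.2 hr1)) (sq_nonneg (‖W‖ - ‖-(1/2:ℝ) • d‖))]
  refine hconv.trans ?_
  rw [h2]
  have hrN : r * (4 * N + 3) = 4 * N - 1 := by rw [hr]; field_simp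
  have h3 : r * ‖W‖ ^ 2 ≤ r * (δ ^ 2 + ‖d‖ ^ 2) := mul_le_mul_of_nonneg_left hw hr0
  have h4 : (1/4) * (1 + 3 * r) * ‖d‖ ^ 2 ≤ (1 - r) * δ ^ 2 := by
    have h5 : (1 + 3 * r) = (1 - r) * (4 * N) := by linarith
    rw [h5]
    nlinarith [mul_le_mul_of_nonneg_left hd (sub_nonneg.2 hr1)]
  linarith

lemma ratio_pow (n : ℕ) (hn : 1 ≤ n) :
    (1/4 : ℝ) ≤ ((4 * (n:ℝ) - 1) / (4 * n + 3)) ^ n := by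
  have hn' : (1:ℝ) ≤ n := by exact_mod_cast hn
  have h0 : (0:ℝ) < 4 * n - 1 := by linarith
  have h1 : (4 * (n:ℝ) + 3) / (4 * n - 1) ≤ Real.exp (4 / (4 * n - 1)) := by
    have := Real.add_one_le_exp (4 / (4 * (n:ℝ) - 1))
    refine le_trans (le_of_eq ?_) this
    field_simp; ring
  have h2 : ((4 * (n:ℝ) + 3) / (4 * n - 1)) ^ n ≤ 4 := by
    calc _ ≤ (Real.exp (4 / (4 * n - 1))) ^ n := by gcongr
      _ = Real.exp (n * (4 / (4 * n - 1))) := by rw [Real.exp_nat_mul]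
      _ ≤ Real.exp (4/3) := by
          gcongr
          rw [← mul_div_assoc, div_le_div_iff₀ h0 (by norm_num)]
          nlinarith
      _ ≤ 4 := by
          refine le_of_pow_le_pow_left₀ (n := 3) (by norm_num) (by norm_num) ?_
          rw [← Real.exp_nat_mul]
          have : Real.exp (((3:ℕ):ℝ) * (4/3)) = (Real.exp 1) ^ 4 := by
            rw [← Real.exp_nat_mul]; norm_num
          rw [this]
          calc (Real.exp 1) ^ 4 ≤ 2.7182818286 ^ 4 := by gcongr; exact Real.exp_one_lt_d9.le
            _ ≤ _ := by norm_num
  have h3 : ((4 * (n:ℝ) - 1) / (4 * n + 3)) ^ n = (((4 * (n:ℝ) + 3) / (4 * n - 1)) ^ n)⁻¹ := by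
    rw [← inv_pow, inv_div]
  rw [h3, one_div]
  exact inv_anti₀ (by positivity) h2

lemma overlap (n : ℕ) (hn : 1 ≤ n) (δ : ℝ) (hδ : 0 < δ)
    (K : Set (EuclideanSpace ℝ (Fin n)))
    (hKconv : Convex ℝ K) (hKcomp : IsCompact K)
    (u v : EuclideanSpace ℝ (Fin n)) (hu : u ∈ K) (hv : v ∈ K)
    (huv : (n:ℝ) * ‖u - v‖ ^ 2 ≤ δ ^ 2) :
    (volume.real (K ∩ closedBall u δ) - volume.real (K ∩ closedBall u δ ∩ closedBall v δ)) *
    (volume.real (K ∩ closedBall v δ) - volume.real (K ∩ closedBall u δ ∩ closedBall v δ)) ≤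
    16 * volume.real (K ∩ closedBall u δ ∩ closedBall v δ) ^ 2 := by
  have hn' : (1:ℝ) ≤ n := by exact_mod_cast hn
  set M := K ∩ closedBall u δ ∩ closedBall v δ with hM
  set r := (4 * (n:ℝ) - 1) / (4 * n + 3) with hr
  have hr0 : 0 < r := by apply div_pos <;> linarith
  have hr1 : r ≤ 1 := by rw [hr, div_le_one (by linarith)]; linarith
  set x0 := (1/2:ℝ) • (u + v) with hx0
  have hx0K : x0 ∈ K := by
    have := hKconv hu hv (a := 1/2) (b := 1/2) (by norm_num) (by norm_num) (by norm_num)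
    rwa [← smul_add] at this
  set A := (K ∩ closedBall u δ) \ closedBall v δ with hA
  set B := (K ∩ closedBall v δ) \ closedBall u δ with hB
  have mK : MeasurableSet K := hKcomp.measurableSet
  have mb : ∀ x : EuclideanSpace ℝ (Fin n), MeasurableSet (closedBall x δ) :=
    fun x => isClosed_closedBall.measurableSet
  set C := AffineMap.homothety x0 r ⁻¹' M with hC
  have hfin : ∀ s ⊆ K, volume s ≠ ⊤ := fun s hs =>
    ne_top_of_le_ne_top hKcomp.measure_lt_top.ne (measure_mono hs)
  have hMC : volume M = ENNReal.ofReal (r ^ n) * volume C := by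
    have := Measure.addHaar_image_homothety (volume : Measure (EuclideanSpace ℝ (Fin n))) x0 r C
    rw [finrank_euclideanSpace_fin, abs_of_pos (pow_pos hr0 n)] at this
    rw [← this, hC, image_preimage_eq]
    intro y
    refine ⟨AffineMap.homothety x0 r⁻¹ y, ?_⟩
    rw [← AffineMap.homothety_mul_apply, mul_inv_cancel₀ hr0.ne', AffineMap.homothety_one]
    rfl
  have hmC : MeasurableSet C := by
    refine ((mK.inter (mb u)).inter (mb v)).preimage ?_
    exact (AffineMap.homothety_continuous x0 r).measurable
  have hbm : volume A * volume B ≤ volume C ^ 2 := by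
    refine bm_euclid n A B C ((mK.inter (mb u)).diff (mb v)) ((mK.inter (mb v)).diff (mb u)) hmC ?_
    rintro y ⟨⟨hyK, hyu⟩, hyv⟩ z ⟨⟨hzK, hzv⟩, hzu⟩
    rw [mem_closedBall, dist_eq_norm] at hyu hyv hzv hzu
    have hp : ‖y - v‖ ^ 2 ≥ ‖y - u‖ ^ 2 := by gcongr; linarith
    have hq : ‖z - u‖ ^ 2 ≥ ‖z - v‖ ^ 2 := by gcongr; linarith
    have ep : y - v = (y - u) + (u - v) := by abel
    have eq : z - u = (z - v) + (v - u) := by abel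
    rw [ep, norm_add_sq_real] at hp
    rw [eq, norm_add_sq_real] at hq
    have hform : AffineMap.homothety x0 r ((1/2:ℝ) • (y + z)) =
        r • ((1/2:ℝ) • (y + z)) + (1 - r) • x0 := by
      rw [AffineMap.homothety_apply]
      simp only [vsub_eq_sub, vadd_eq_add]
      module
    have huv' : (n:ℝ) * ‖v - u‖ ^ 2 ≤ δ ^ 2 := by rwa [norm_sub_rev]
    have g1 := geom_aux (y - u) (z - v) (u - v) δ n hδ hn' huv hyu hzv (by linarith)
    have g2 := geom_aux (z - v) (y - u) (v - u) δ n hδ hn' huv' hzv hyu (by linarith)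
    rw [hC, mem_preimage, hform]
    refine ⟨⟨hKconv ?_ hx0K hr0.le (by linarith) (by ring), ?_⟩, ?_⟩
    · have := hKconv hyK hzK (a := 1/2) (b := 1/2) (by norm_num) (by norm_num) (by norm_num)
      rwa [← smul_add] at this
    · rw [mem_closedBall, dist_eq_norm]
      refine le_of_eq_of_le (congrArg norm ?_) g1
      rw [hx0]; module
    · rw [mem_closedBall, dist_eq_norm]
      refine le_of_eq_of_le (congrArg norm ?_) g2
      rw [hx0]; module
  have hA' : volume.real A = volume.real (K ∩ closedBall u δ) - volume.real M := by
    have := measureReal_inter_add_sdiff (μ := volume) (s := K ∩ closedBall u δ) (mb v)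
      (hfin _ inter_subset_left)
    linarith
  have hB' : volume.real B = volume.real (K ∩ closedBall v δ) - volume.real M := by
    have := measureReal_inter_add_sdiff (μ := volume) (s := K ∩ closedBall v δ) (mb u)
      (hfin _ inter_subset_left)
    rw [inter_right_comm, ← hM] at this
    linarith
  have hMC' : volume.real M = r ^ n * volume.real C := by
    rw [measureReal_def, hMC, ENNReal.toReal_mul, ENNReal.toReal_ofReal (by positivity)]; rfl
  have hCfin : volume C ≠ ⊤ := by
    intro h
    have := hfin M (inter_subset_left.trans inter_subset_left)
    rw [hMC, h, ENNReal.mul_top] at this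
    · exact this rfl
    · simpa using pow_pos hr0 n
  have hbm' : volume.real A * volume.real B ≤ volume.real C ^ 2 := by
    rw [measureReal_def, measureReal_def, measureReal_def, ← ENNReal.toReal_mul, ← ENNReal.toReal_pow]
    exact ENNReal.toReal_mono (ENNReal.pow_ne_top hCfin) hbm
  rw [← hA', ← hB']
  refine hbm'.trans ?_
  have h4 : volume.real C ≤ 4 * volume.real M := by
    rw [hMC']
    have := mul_le_mul_of_nonneg_right (ratio_pow n hn) (measureReal_nonneg (μ := volume) (s := C))
    linarith
  calc volume.real C ^ 2 ≤ (4 * volume.real M) ^ 2 := by gcongr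
    _ = _ := by ring

lemma final_arith (a b p q μ : ℝ) (ha : 0 < a) (hb : 0 < b) (ha1 : a ≤ 1) (hb1 : b ≤ 1)
    (hp : 0 < p) (hq : 0 < q) (hpq : p ≤ 2 * q) (hqp : q ≤ 2 * p) (μ0 : 0 ≤ μ)
    (hμ : μ ≤ (a ^ 2 + b ^ 2) / 20) (hμa : μ ≤ a) (hμb : μ ≤ b)
    (H : (a - μ) * (b - μ) ≤ 16 * μ ^ 2) :
    (1:ℝ) / 4 ≤ |a * p - b * q| / max (a * p) (b * q) := by
  wlog hab : a ≤ b generalizing a b p q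
  · have := this b a q p hb ha hb1 ha1 hq hp hqp hpq (by linarith) hμb hμa (by linarith)
      (by linarith)
    rwa [abs_sub_comm, max_comm]
  by_contra hcon
  have hpos : 0 < max (a * p) (b * q) := lt_max_of_lt_left (mul_pos ha hp)
  rw [not_le, div_lt_iff₀ hpos, abs_lt] at hcon
  have h1 : 3 * (b * q) ≤ 4 * (a * p) := by
    have h0 := mul_pos ha hp
    rcases le_total (a * p) (b * q) with h | h
    · rw [max_eq_right h] at hcon; linarith
    · linarith
  have h2 : b ≤ 8 / 3 * a := by
    have h3 : a * p ≤ a * (2 * q) := by gcongr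
    have : b * q ≤ (8 / 3 * a) * q := by linarith
    exact le_of_mul_le_mul_right this hq
  have h3 : a ≤ 5 * μ := by
    have : (a - μ) ^ 2 ≤ (4 * μ) ^ 2 := by
      have := mul_le_mul_of_nonneg_left (sub_le_sub_right hab μ) (sub_nonneg.2 hμa)
      linarith
    have := abs_le_of_sq_le_sq' this (by linarith)
    linarith [this.2]
  have h4 : a ^ 2 ≤ a := by nlinarith
  have h5 : b ^ 2 ≤ b := by nlinarith
  linarith

lemma exp_ratio (n : ℕ) (hn : 1 ≤ n) (σ δ : ℝ) (hσ : 0 < σ) (hδ : 0 < δ)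
    (hδσ : δ ≤ σ / (8 * Real.sqrt n)) (x y : EuclideanSpace ℝ (Fin n))
    (hx : ‖x‖ ≤ 4 * σ * Real.sqrt n) (hy : ‖y‖ ≤ 4 * σ * Real.sqrt n) (hxy : ‖y - x‖ ≤ δ) :
    Real.exp (-(1/2)) * Real.exp (-‖x‖^2 / (2 * σ^2)) ≤ Real.exp (-‖y‖^2 / (2 * σ^2)) := by
  rw [← Real.exp_add]
  have hs : 0 < Real.sqrt n := Real.sqrt_pos.2 (by exact_mod_cast hn)
  have h1 : δ * (8 * Real.sqrt n) ≤ σ := (le_div_iff₀ (by positivity)).1 hδσ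
  have h2 : ‖y‖ - ‖x‖ ≤ δ := (norm_sub_norm_le y x).trans hxy
  have h3 : ‖y‖ ^ 2 - ‖x‖ ^ 2 ≤ σ ^ 2 := by
    calc ‖y‖ ^ 2 - ‖x‖ ^ 2 = (‖y‖ - ‖x‖) * (‖y‖ + ‖x‖) := by ring
      _ ≤ δ * (‖y‖ + ‖x‖) := by gcongr
      _ ≤ δ * (8 * Real.sqrt n * σ) := by gcongr; linarith
      _ = δ * (8 * Real.sqrt n) * σ := by ring
      _ ≤ σ * σ := by gcongr
      _ = _ := by ring
  rw [Real.exp_le_exp]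
  have h4 : (‖y‖ ^ 2 - ‖x‖ ^ 2) / (2 * σ ^ 2) ≤ 1 / 2 := by
    rw [div_le_iff₀ (by positivity)]; linarith
  rw [sub_div] at h4
  rw [neg_div, neg_div]
  linarith

lemma crossing (n : ℕ) (K T : Set (EuclideanSpace ℝ (Fin n))) (δ A : ℝ) (hA : 0 < A)
    (hKcomp : IsCompact K) (hT : MeasurableSet T) (x : EuclideanSpace ℝ (Fin n))
    (f : EuclideanSpace ℝ (Fin n) → ℝ) (hf : Continuous f) (hf0 : ∀ y, 0 < f y)
    (hfx : ∀ y ∈ K, ‖y - x‖ ≤ δ → Real.exp (-(1/2)) * f x ≤ f y)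
    (hV : 0 < volume.real (K ∩ closedBall x δ))
    (h : (∫ y in T ∩ K ∩ closedBall x δ, min 1 (f y / f x)) / volume.real (K ∩ closedBall x δ) ≤
      volume.real (K ∩ closedBall x δ) / A / (20 * Real.exp 1)) :
    volume.real (T ∩ K ∩ closedBall x δ) ≤ volume.real (K ∩ closedBall x δ) ^ 2 / (20 * A) := by
  have hm : MeasurableSet (T ∩ K ∩ closedBall x δ) :=
    (hT.inter hKcomp.measurableSet).inter isClosed_closedBall.measurableSet
  have hfin : volume (T ∩ K ∩ closedBall x δ) ≠ ⊤ :=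
    ne_top_of_le_ne_top hKcomp.measure_lt_top.ne
      (measure_mono (inter_subset_left.trans inter_subset_right))
  set V := volume.real (K ∩ closedBall x δ)
  have hintg : IntegrableOn (fun y => min 1 (f y / f x)) (T ∩ K ∩ closedBall x δ) := by
    refine Measure.integrableOn_of_bounded (M := 1) hfin (by fun_prop) (.of_forall fun y => ?_)
    have : 0 ≤ f y / f x := (div_pos (hf0 y) (hf0 x)).le
    rw [Real.norm_of_nonneg (le_min zero_le_one this)]
    exact min_le_left _ _
  have h1 := setIntegral_ge_of_const_le_real (c := Real.exp (-(1/2))) hm hfin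
    (fun y hy => le_min (Real.exp_le_one_iff.2 (by norm_num))
      ((le_div_iff₀ (hf0 x)).2 (hfx y hy.1.2 (by
        have := hy.2; rwa [mem_closedBall, dist_eq_norm] at this)))) hintg
  rw [div_le_iff₀ hV] at h
  have h2 := h1.trans h
  have he : Real.exp 1 * Real.exp (-(1/2)) = Real.exp (1/2) := by
    rw [← Real.exp_add]; norm_num
  have he1 : 1 ≤ Real.exp (1/2) := Real.one_le_exp (by norm_num)
  have h3 : V / A / (20 * Real.exp 1) * V = V ^ 2 / (20 * A) * (Real.exp 1)⁻¹ := by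
    field_simp
  rw [h3, ← div_eq_mul_inv, le_div_iff₀ (Real.exp_pos 1)] at h2
  refine le_trans ?_ h2
  have h0 : 0 ≤ volume.real (T ∩ K ∩ closedBall x δ) := measureReal_nonneg
  calc _ ≤ Real.exp (1/2) * volume.real (T ∩ K ∩ closedBall x δ) := le_mul_of_one_le_left h0 he1
    _ = _ := by rw [← he]; ring

lemma local_pos (n : ℕ) (K : Set (EuclideanSpace ℝ (Fin n))) (δ : ℝ) (hδ : 0 < δ)
    (hKconv : Convex ℝ K) (hKcomp : IsCompact K)
    (hKball : closedBall (0 : EuclideanSpace ℝ (Fin n)) 1 ⊆ K)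
    (x : EuclideanSpace ℝ (Fin n)) (hx : x ∈ K) :
    0 < volume.real (K ∩ closedBall x δ) := by
  have hne : (interior K).Nonempty :=
    ⟨0, mem_interior.2 ⟨ball 0 1, ball_subset_closedBall.trans hKball, isOpen_ball, by simp⟩⟩
  have hcl : x ∈ closure (interior K) := by
    rw [hKconv.closure_interior_eq_closure_of_nonempty_interior hne]
    exact subset_closure hx
  have h1 : (ball x δ ∩ interior K).Nonempty :=
    mem_closure_iff.1 hcl _ isOpen_ball (mem_ball_self hδ)
  refine ENNReal.toReal_pos ?_ ?_
  · have h2 := (isOpen_ball.inter isOpen_interior).measure_pos volume h1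
    have h3 : ball x δ ∩ interior K ⊆ K ∩ closedBall x δ := fun y hy =>
      ⟨interior_subset hy.2, ball_subset_closedBall hy.1⟩
    exact (h2.trans_le (measure_mono h3)).ne'
  · exact ne_top_of_le_ne_top hKcomp.measure_lt_top.ne (measure_mono inter_subset_left)

/-- Lemma 5.2 of the paper: with the speedy-walk notation, if `u ∈ S`, `v ∈ K∖S` are
close (`‖u-v‖ < δ/√n`) and both have small crossing probability
(`P_u(K∖S) ≤ ℓ(u)/(20e)`, `P_v(S) ≤ ℓ(v)/(20e)`), then the weighted densities differ:
`|ℓ(u)f(u) - ℓ(v)f(v)| / max{ℓ(u)f(u), ℓ(v)f(v)} ≥ 1/4`. -/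
theorem speedy_density_gap
    (n : ℕ) (σ δ : ℝ) (hσ : 0 < σ)
    (K : Set (EuclideanSpace ℝ (Fin n)))
    (hKconv : Convex ℝ K) (hKcomp : IsCompact K)
    (hKball : closedBall (0 : EuclideanSpace ℝ (Fin n)) 1 ⊆ K)
    (hKbdd : K ⊆ closedBall (0 : EuclideanSpace ℝ (Fin n)) (4 * σ * Real.sqrt n))
    (hδ : 0 < δ) (hδσ : δ ≤ σ / (8 * Real.sqrt n))
    (f : EuclideanSpace ℝ (Fin n) → ℝ)
    (hf : ∀ x, f x = Real.exp (-‖x‖^2 / (2 * σ^2)))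
    (ℓ : EuclideanSpace ℝ (Fin n) → ℝ)
    (hℓ : ∀ x, ℓ x = (volume (K ∩ closedBall x δ)).toReal /
      (volume (closedBall (0 : EuclideanSpace ℝ (Fin n)) δ)).toReal)
    (P : EuclideanSpace ℝ (Fin n) → Set (EuclideanSpace ℝ (Fin n)) → ℝ)
    (hP : ∀ x S, P x S = (∫ y in S ∩ K ∩ closedBall x δ, min 1 (f y / f x)) /
      (volume (K ∩ closedBall x δ)).toReal)
    (S : Set (EuclideanSpace ℝ (Fin n))) (hS : MeasurableSet S) (hSK : S ⊆ K)
    (u v : EuclideanSpace ℝ (Fin n)) (hu : u ∈ S) (hv : v ∈ K \ S)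
    (huv : ‖u - v‖ < δ / Real.sqrt n)
    (hPu : P u (K \ S) ≤ ℓ u / (20 * Real.exp 1))
    (hPv : P v S ≤ ℓ v / (20 * Real.exp 1)) :
    (1 : ℝ) / 4 ≤ |ℓ u * f u - ℓ v * f v| / max (ℓ u * f u) (ℓ v * f v) := by
  rcases Nat.eq_zero_or_pos n with rfl | hn
  · simp at hδσ; linarith
  have hn1 : 1 ≤ n := hn
  have hn' : (1:ℝ) ≤ n := by exact_mod_cast hn1
  have huK : u ∈ K := hSK hu
  have hvK : v ∈ K := hv.1
  have hs : 1 ≤ Real.sqrt n := Real.one_le_sqrt.2 hn'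
  have huvδ : ‖u - v‖ ≤ δ := huv.le.trans (div_le_self hδ.le hs)
  have huv2 : (n:ℝ) * ‖u - v‖ ^ 2 ≤ δ ^ 2 := by
    have h1 : ‖u - v‖ * Real.sqrt n ≤ δ := ((lt_div_iff₀ (by linarith)).1 huv).le
    calc (n:ℝ) * ‖u - v‖ ^ 2 = (‖u - v‖ * Real.sqrt n) ^ 2 := by
          rw [mul_pow, Real.sq_sqrt (by linarith)]; ring
      _ ≤ δ ^ 2 := by gcongr
  have hb : ∀ x ∈ K, ‖x‖ ≤ 4 * σ * Real.sqrt n := fun x hx => by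
    simpa using hKbdd hx
  have hf0 : ∀ y, 0 < f y := fun y => by rw [hf]; exact Real.exp_pos _
  have hfc : Continuous f := by
    have : f = fun x => Real.exp (-‖x‖^2 / (2 * σ^2)) := funext hf
    rw [this]; fun_prop
  have hfx : ∀ x ∈ K, ∀ y ∈ K, ‖y - x‖ ≤ δ → Real.exp (-(1/2)) * f x ≤ f y := by
    intro x hx y hy hxy
    rw [hf, hf]
    exact exp_ratio n hn1 σ δ hσ hδ hδσ x y (hb x hx) (hb y hy) hxy
  have he : (1/2:ℝ) ≤ Real.exp (-(1/2)) := by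
    have := Real.add_one_le_exp (-(1/2):ℝ); linarith
  have hVu := local_pos n K δ hδ hKconv hKcomp hKball u huK
  have hVv := local_pos n K δ hδ hKconv hKcomp hKball v hvK
  have hball : ∀ x : EuclideanSpace ℝ (Fin n), volume.real (closedBall x δ) =
      volume.real (closedBall (0 : EuclideanSpace ℝ (Fin n)) δ) := fun x => by
    rw [measureReal_def, measureReal_def, Measure.addHaar_closedBall_center]
  have hle : ∀ x : EuclideanSpace ℝ (Fin n), volume.real (K ∩ closedBall x δ) ≤
      volume.real (closedBall (0 : EuclideanSpace ℝ (Fin n)) δ) := fun x => by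
    rw [← hball x]
    exact measureReal_mono inter_subset_right measure_closedBall_lt_top.ne
  have hov := overlap n hn1 δ hδ K hKconv hKcomp u v huK hvK huv2
  rw [hP, hℓ] at hPu hPv
  simp only [← measureReal_def] at hPu hPv hℓ
  have hA : 0 < volume.real (closedBall (0 : EuclideanSpace ℝ (Fin n)) δ) := hVu.trans_le (hle u)
  have cu := crossing n K (K \ S) δ _ hA hKcomp (hKcomp.measurableSet.diff hS) u f hfc hf0
    (hfx u huK) hVu hPu
  have cv := crossing n K S δ _ hA hKcomp hS v f hfc hf0 (hfx v hvK) hVv hPv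
  have hfin : ∀ s ⊆ K, volume s ≠ ⊤ := fun s hs =>
    ne_top_of_le_ne_top hKcomp.measure_lt_top.ne (measure_mono hs)
  have hMsub : volume.real (K ∩ closedBall u δ ∩ closedBall v δ) ≤
      volume.real ((K \ S) ∩ K ∩ closedBall u δ) + volume.real (S ∩ K ∩ closedBall v δ) := by
    refine le_trans (measureReal_mono (fun y hy => ?_) ?_) (measureReal_union_le _ _)
    · by_cases hyS : y ∈ S
      · exact Or.inr ⟨⟨hyS, hy.1.1⟩, hy.2⟩
      · exact Or.inl ⟨⟨⟨hy.1.1, hyS⟩, hy.1.1⟩, hy.1.2⟩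
    · exact hfin _ (union_subset (inter_subset_left.trans inter_subset_right)
        (inter_subset_left.trans inter_subset_right))
  have hMu : volume.real (K ∩ closedBall u δ ∩ closedBall v δ) ≤
      volume.real (K ∩ closedBall u δ) :=
    measureReal_mono inter_subset_left (hfin _ inter_subset_left)
  have hMv : volume.real (K ∩ closedBall u δ ∩ closedBall v δ) ≤
      volume.real (K ∩ closedBall v δ) :=
    measureReal_mono (fun y hy => ⟨hy.1.1, hy.2⟩) (hfin _ inter_subset_left)
  have hlu := hle u
  have hlv := hle v
  have hM0 : 0 ≤ volume.real (K ∩ closedBall u δ ∩ closedBall v δ) := measureReal_nonneg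
  have r1 : f u ≤ 2 * f v := by
    have h1 := hfx u huK v hvK (by rwa [norm_sub_rev])
    have h2 := mul_le_mul_of_nonneg_right he (hf0 u).le
    linarith
  have r2 : f v ≤ 2 * f u := by
    have h1 := hfx v hvK u huK huvδ
    have h2 := mul_le_mul_of_nonneg_right he (hf0 v).le
    linarith
  rw [hℓ u, hℓ v]
  generalize volume.real (closedBall (0 : EuclideanSpace ℝ (Fin n)) δ) = A at *
  generalize volume.real (K ∩ closedBall u δ ∩ closedBall v δ) = M at *
  generalize volume.real (K ∩ closedBall u δ) = Vu at *
  generalize volume.real (K ∩ closedBall v δ) = Vv at *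
  refine final_arith (Vu / A) (Vv / A) (f u) (f v) (M / A) (by positivity) (by positivity)
    ((div_le_one hA).2 hlu) ((div_le_one hA).2 hlv) (hf0 u) (hf0 v) r1 r2 (by positivity)
    ?_ (by gcongr) (by gcongr) ?_
  · have h1 : M ≤ Vu ^ 2 / (20 * A) + Vv ^ 2 / (20 * A) := by linarith
    rw [div_le_iff₀ hA]
    refine h1.trans (le_of_eq ?_)
    field_simp
  · rw [← sub_div, ← sub_div, div_mul_div_comm, div_pow, ← mul_div_assoc, ← pow_two]
    gcongr
end
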